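/- With S_k(α) = Σ_{δX ≤ p^k ≤ X} (log p) e(p^k α) over primes, for every natural number n, every real k > 1, δ ∈ (0,1), and ε > 0, one has ∫_n^{n+1} |S_k(α)|⁴ dα ≪_{k,δ,ε} (X^{2/k} + X^{4/k − 1}) X^{ε}. -/

import Mathlib

open Real MeasureTheory

/-- `e(x) = exp(2πix)` -/
noncomputable def e (x : ℝ) : ℂ := Complex.exp (2 * Real.pi * Complex.I * x)

/-- `S_k(α) = Σ_{δX ≤ p^k ≤ X} (log p) e(p^k α)`, sum over primes `p`. -/
noncomputable def Sk (δ X k : ℝ) (α : ℝ) : ℂ :=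
  ∑ p ∈ (Finset.Icc 1 (Nat.floor X)).filter
      (fun p : ℕ => p.Prime ∧ δ * X ≤ (p : ℝ) ^ k ∧ (p : ℝ) ^ k ≤ X),
    (Real.log p : ℂ) * e ((p : ℝ) ^ k * α)

/-!
Majorant principle: the fourth moment of an exponential sum over an interval of length `L` is, up to
a constant, at most `L / T + 1` times the fourth moment over `[0, T]` of any sum with the same
frequencies and coefficients that dominate the original ones in absolute value. So the weights
`log p` and the primality condition can be dropped, and everything follows from the bound
`O(M^(4 + θ))`, for all `θ > 0`, on the fourth moment over `[0, M²]` of `∑ e((m / M)^k y)`,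
`c M ≤ m ≤ M`.

This bound is self-dual. For `y` of size `Y` below `M²`, Poisson summation and stationary phase
transform a smoothed sum into one of length `Y / M` with exponent `k' = k / (k - 1)`, to which a
bound with some `θ` applies. It controls the original sum for `y ≤ M^(2 - θ / (1 + θ))`, and the
majorant principle extends this up to `M²` at the cost of a factor `M^(θ / (1 + θ))`. Since
`k'' = k`, the map `θ ↦ θ / (1 + θ)` can be iterated from the trivial `θ = 2`, along
`θ = 2 / (j + 1)`.

The stationary phase step is carried out under the integral: integration by parts replaces the
integrand by one with the damping factor `1 / (1 + Y g'²)`, whose `L¹` norm already has the size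
of the stationary phase main term. Minkowski's inequality then takes the fourth moment inside that
integral, and no pointwise asymptotic expansion is needed.
-/

open Filter intervalIntegral
open scoped FourierTransform ComplexConjugate

lemma e_eq_fourierChar (x : ℝ) : e x = 𝐞 x := by
  rw [Real.fourierChar_apply, e]
  congr 1
  push_cast
  ring

lemma e_zero : e 0 = 1 := by simp [e_eq_fourierChar]

lemma e_add (x y : ℝ) : e (x + y) = e x * e y := by
  simp [e_eq_fourierChar, AddChar.map_add_eq_mul]

lemma norm_e (x : ℝ) : ‖e x‖ = 1 := by
  rw [e_eq_fourierChar, Circle.norm_coe]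

lemma conj_e (x : ℝ) : conj (e x) = e (-x) := by
  simp [e_eq_fourierChar, AddChar.map_neg_eq_inv]

lemma hasDerivAt_e (x : ℝ) : HasDerivAt e (2 * π * Complex.I * e x) x := by
  simpa only [← e_eq_fourierChar] using Real.hasDerivAt_fourierChar x

@[fun_prop]
lemma continuous_e : Continuous e :=
  continuous_iff_continuousAt.2 fun x => (hasDerivAt_e x).continuousAt

lemma hasDerivAt_e_comp {p : ℝ → ℝ} {p' x : ℝ} (hp : HasDerivAt p p' x) :
    HasDerivAt (fun x => e (p x)) (2 * π * Complex.I * p' * e (p x)) x := by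
  have h := (hasDerivAt_e (p x)).scomp x hp
  rwa [Complex.real_smul, ← mul_assoc, mul_comm (p' : ℂ)] at h

/-- The exponential polynomial `∑_{a ∈ A} c_a e(l_a y)` with coefficients `c`, frequencies `l`. -/
noncomputable def expSum {ι : Type*} (A : Finset ι) (c : ι → ℂ) (l : ι → ℝ) (y : ℝ) : ℂ :=
  ∑ a ∈ A, c a * e (l a * y)

section Majorant

variable {ι : Type*} (A : Finset ι) (c : ι → ℂ) (d : ι → ℝ) (l : ι → ℝ)

@[fun_prop]
lemma continuous_expSum : Continuous (expSum A c l) := by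
  unfold expSum
  fun_prop

lemma norm_expSum_le (y : ℝ) : ‖expSum A c l y‖ ≤ ∑ a ∈ A, ‖c a‖ :=
  (norm_sum_le _ _).trans_eq <| Finset.sum_congr rfl fun a _ => by rw [norm_mul, norm_e, mul_one]

lemma norm_expSum_ofReal_neg (y : ℝ) :
    ‖expSum A (fun a => (d a : ℂ)) l (-y)‖ = ‖expSum A (fun a => (d a : ℂ)) l y‖ := by
  rw [← RCLike.norm_conj]
  simp only [expSum, map_sum, map_mul, conj_e, Complex.conj_ofReal, mul_neg, neg_neg]

lemma expSum_sq (y : ℝ) :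
    expSum A c l y ^ 2 =
      expSum (A ×ˢ A) (fun q => c q.1 * c q.2) (fun q => l q.1 + l q.2) y := by
  simp only [expSum, sq, Finset.sum_mul_sum, Finset.sum_product, add_mul, e_add]
  refine Finset.sum_congr rfl fun a _ => Finset.sum_congr rfl fun b _ => ?_
  ring

lemma ofReal_norm_expSum_sq (y : ℝ) :
    ((‖expSum A c l y‖ ^ 2 : ℝ) : ℂ) =
      expSum (A ×ˢ A) (fun q => c q.1 * conj (c q.2)) (fun q => l q.1 - l q.2) y := by
  rw [← Complex.normSq_eq_norm_sq, ← Complex.mul_conj]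
  simp only [expSum, map_sum, map_mul, conj_e, Finset.sum_mul_sum, Finset.sum_product]
  refine Finset.sum_congr rfl fun a _ => Finset.sum_congr rfl fun b _ => ?_
  rw [sub_mul, sub_eq_add_neg, e_add]
  ring

lemma integral_integral_e (t y₀ T : ℝ) :
    ∫ v in (0 : ℝ)..T, ∫ u in (0 : ℝ)..T, e (t * (y₀ + u - v)) =
      e (t * y₀) * ((‖∫ u in (0 : ℝ)..T, e (t * u)‖ ^ 2 : ℝ) : ℂ) := by
  have hsplit (u v : ℝ) : e (t * (y₀ + u - v)) = e (t * y₀) * conj (e (t * v)) * e (t * u) := by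
    rw [conj_e, ← e_add, ← e_add]
    congr 1
    ring
  have hconj : ∫ v in (0 : ℝ)..T, conj (e (t * v)) = conj (∫ v in (0 : ℝ)..T, e (t * v)) := by
    rw [intervalIntegral, intervalIntegral, map_sub, integral_conj, integral_conj]
  simp_rw [hsplit, intervalIntegral.integral_const_mul, intervalIntegral.integral_mul_const,
    intervalIntegral.integral_const_mul]
  rw [hconj, mul_assoc, mul_comm (conj _), Complex.mul_conj, Complex.normSq_eq_norm_sq]

lemma integral_integral_expSum (y₀ T : ℝ) :
    ∫ v in (0 : ℝ)..T, ∫ u in (0 : ℝ)..T, expSum A c l (y₀ + u - v) =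
      ∑ a ∈ A, c a * (e (l a * y₀) * ((‖∫ u in (0 : ℝ)..T, e (l a * u)‖ ^ 2 : ℝ) : ℂ)) := by
  have hinner (v : ℝ) : ∫ u in (0 : ℝ)..T, expSum A c l (y₀ + u - v) =
      ∑ a ∈ A, c a * ∫ u in (0 : ℝ)..T, e (l a * (y₀ + u - v)) := by
    simp only [expSum]
    rw [intervalIntegral.integral_finsetSum
      fun a _ => Continuous.intervalIntegrable (by fun_prop) _ _]
    simp_rw [intervalIntegral.integral_const_mul]
  simp_rw [hinner]
  rw [intervalIntegral.integral_finsetSum]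
  · simp_rw [intervalIntegral.integral_const_mul, integral_integral_e]
  · intro a _
    refine (continuous_const.mul ?_).intervalIntegrable _ _
    exact continuous_parametric_intervalIntegral_of_continuous' (by fun_prop) _ _

lemma ofReal_integral_integral_norm_expSum_sq (y₀ T : ℝ) :
    ((∫ v in (0 : ℝ)..T, ∫ u in (0 : ℝ)..T, ‖expSum A c l (y₀ + u - v)‖ ^ 2 : ℝ) : ℂ) =
      ∑ q ∈ A ×ˢ A, c q.1 * conj (c q.2) * (e ((l q.1 - l q.2) * y₀) *
        ((‖∫ u in (0 : ℝ)..T, e ((l q.1 - l q.2) * u)‖ ^ 2 : ℝ) : ℂ)) := by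
  simp_rw [← intervalIntegral.integral_ofReal, ofReal_norm_expSum_sq, integral_integral_expSum]

variable {A c d l}

lemma integral_integral_norm_expSum_sq_le (hcd : ∀ a ∈ A, ‖c a‖ ≤ d a) (y₀ T : ℝ) :
    ∫ v in (0 : ℝ)..T, ∫ u in (0 : ℝ)..T, ‖expSum A c l (y₀ + u - v)‖ ^ 2 ≤
      ∫ v in (0 : ℝ)..T, ∫ u in (0 : ℝ)..T,
        ‖expSum A (fun a => (d a : ℂ)) l (0 + u - v)‖ ^ 2 := by
  have hd : ∫ v in (0 : ℝ)..T, ∫ u in (0 : ℝ)..T,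
      ‖expSum A (fun a => (d a : ℂ)) l (0 + u - v)‖ ^ 2 =
      ∑ q ∈ A ×ˢ A, d q.1 * d q.2 * ‖∫ u in (0 : ℝ)..T, e ((l q.1 - l q.2) * u)‖ ^ 2 := by
    apply Complex.ofReal_injective
    rw [ofReal_integral_integral_norm_expSum_sq]
    push_cast
    simp only [mul_zero, e_zero, one_mul, Complex.conj_ofReal]
  rw [hd]
  refine (le_abs_self _).trans ?_
  rw [← Real.norm_eq_abs, ← Complex.norm_real, ofReal_integral_integral_norm_expSum_sq]
  refine (norm_sum_le _ _).trans (Finset.sum_le_sum fun q hq => ?_)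
  obtain ⟨h₁, h₂⟩ := Finset.mem_product.1 hq
  rw [norm_mul, norm_mul, norm_mul (e _), norm_e, one_mul, RCLike.norm_conj, Complex.norm_real,
    Real.norm_of_nonneg (by positivity)]
  have := (norm_nonneg _).trans (hcd _ h₁)
  gcongr
  exacts [hcd _ h₁, hcd _ h₂]

end Majorant

section Windows

variable {f : ℝ → ℝ} {T B : ℝ}

lemma half_mul_integral_le_integral_integral (hf : Continuous f) (h0 : ∀ x, 0 ≤ f x) (y₀ : ℝ)
    (hT : 0 ≤ T) :
    T / 2 * ∫ y in y₀..(y₀ + T / 2), f y ≤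
      ∫ v in (0 : ℝ)..T, ∫ u in (0 : ℝ)..T, f (y₀ + u - v) := by
  have hc : Continuous fun v : ℝ => ∫ u in (0 : ℝ)..T, f (y₀ + u - v) :=
    continuous_parametric_intervalIntegral_of_continuous' (by fun_prop) _ _
  calc T / 2 * ∫ y in y₀..(y₀ + T / 2), f y
      = ∫ _v in (0 : ℝ)..(T / 2), ∫ y in y₀..(y₀ + T / 2), f y := by simp
    _ ≤ ∫ v in (0 : ℝ)..(T / 2), ∫ u in (0 : ℝ)..T, f (y₀ + u - v) := by
        refine integral_mono_on (by linarith) (by simp) (hc.intervalIntegrable _ _) fun v hv => ?_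
        have hshift := integral_comp_add_right (a := v) (b := v + T / 2) f (y₀ - v)
        rw [show v + (y₀ - v) = y₀ by ring, show v + T / 2 + (y₀ - v) = y₀ + T / 2 by ring]
          at hshift
        rw [← hshift]
        simp only [show ∀ u : ℝ, u + (y₀ - v) = y₀ + u - v from fun u => by ring]
        exact integral_mono_interval hv.1 (by linarith) (by linarith [hv.2])
          (Eventually.of_forall fun _ => h0 _) (Continuous.intervalIntegrable (by fun_prop) _ _)
    _ ≤ ∫ v in (0 : ℝ)..T, ∫ u in (0 : ℝ)..T, f (y₀ + u - v) :=
        integral_mono_interval le_rfl (by linarith) (by linarith)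
          (Eventually.of_forall fun v => integral_nonneg hT fun u _ => h0 _)
          (hc.intervalIntegrable _ _)

lemma integral_integral_le_of_even (hf : Continuous f) (h0 : ∀ x, 0 ≤ f x) (hs : ∀ x, f (-x) = f x)
    (hT : 0 ≤ T) :
    ∫ v in (0 : ℝ)..T, ∫ u in (0 : ℝ)..T, f (0 + u - v) ≤ T * (2 * ∫ y in (0 : ℝ)..T, f y) := by
  have hc : Continuous fun v : ℝ => ∫ u in (0 : ℝ)..T, f (0 + u - v) :=
    continuous_parametric_intervalIntegral_of_continuous' (by fun_prop) _ _
  have hfi (a b : ℝ) : IntervalIntegrable f volume a b := hf.intervalIntegrable _ _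
  have hneg : ∫ y in (-T)..0, f y = ∫ y in (0 : ℝ)..T, f y := by
    simpa only [hs, neg_zero] using (integral_comp_neg (a := 0) (b := T) f).symm
  calc ∫ v in (0 : ℝ)..T, ∫ u in (0 : ℝ)..T, f (0 + u - v)
      ≤ ∫ _v in (0 : ℝ)..T, ∫ y in (-T)..T, f y := by
        refine integral_mono_on hT (hc.intervalIntegrable _ _) (by simp) fun v hv => ?_
        simp only [zero_add, integral_comp_sub_right, zero_sub]
        exact integral_mono_interval (by linarith [hv.2]) (by linarith) (by linarith [hv.1])
          (Eventually.of_forall fun _ => h0 _) (hfi _ _)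
    _ = T * (2 * ∫ y in (0 : ℝ)..T, f y) := by
        rw [← integral_add_adjacent_intervals (hfi (-T) 0) (hfi 0 T), hneg]
        simp
        ring

lemma integral_le_natCast_mul_of_windows {h : ℝ} (hf : Continuous f)
    (hB : ∀ y, ∫ x in y..(y + h), f x ≤ B) (y₀ : ℝ) (n : ℕ) :
    ∫ x in y₀..(y₀ + n * h), f x ≤ n * B := by
  induction n with
  | zero => simp
  | succ n ih =>
    rw [show y₀ + ((n + 1 : ℕ) : ℝ) * h = y₀ + n * h + h by push_cast; ring,
      ← integral_add_adjacent_intervals (hf.intervalIntegrable y₀ (y₀ + n * h))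
        (hf.intervalIntegrable _ _)]
    push_cast
    linarith [hB (y₀ + n * h)]

lemma integral_le_of_windows {h : ℝ} (hh : 0 < h) (hf : Continuous f) (h0 : ∀ x, 0 ≤ f x)
    (hB : ∀ y, ∫ x in y..(y + h), f x ≤ B) {y₀ y₁ : ℝ} (hy : y₀ ≤ y₁) :
    ∫ x in y₀..y₁, f x ≤ ((y₁ - y₀) / h + 1) * B := by
  have hB0 : 0 ≤ B := (integral_nonneg (by linarith) fun x _ => h0 x).trans (hB 0)
  have hceil := (div_le_iff₀ hh).1 (Nat.le_ceil ((y₁ - y₀) / h))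
  calc ∫ x in y₀..y₁, f x ≤ ∫ x in y₀..(y₀ + ⌈(y₁ - y₀) / h⌉₊ * h), f x :=
        integral_mono_interval le_rfl hy (by linarith) (Eventually.of_forall fun _ => h0 _)
          (hf.intervalIntegrable _ _)
    _ ≤ ⌈(y₁ - y₀) / h⌉₊ * B := integral_le_natCast_mul_of_windows hf hB _ _
    _ ≤ ((y₁ - y₀) / h + 1) * B := by
        gcongr
        exact (Nat.ceil_lt_add_one (div_nonneg (sub_nonneg.2 hy) hh.le)).le

end Windows

section MajorantPrinciple

variable {ι : Type*} {A : Finset ι} {c : ι → ℂ} {d : ι → ℝ} {l : ι → ℝ} {T : ℝ}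

lemma integral_window_norm_expSum_sq_le (hcd : ∀ a ∈ A, ‖c a‖ ≤ d a) (hT : 0 < T) (y₀ : ℝ) :
    ∫ y in y₀..(y₀ + T / 2), ‖expSum A c l y‖ ^ 2 ≤
      4 * ∫ y in (0 : ℝ)..T, ‖expSum A (fun a => (d a : ℂ)) l y‖ ^ 2 := by
  have hlower := half_mul_integral_le_integral_integral (f := fun y => ‖expSum A c l y‖ ^ 2)
    (by fun_prop) (fun _ => by positivity) y₀ hT.le
  have hupper := integral_integral_le_of_even
    (f := fun y => ‖expSum A (fun a => (d a : ℂ)) l y‖ ^ 2)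
    (by fun_prop) (fun _ => by positivity) (fun x => by rw [norm_expSum_ofReal_neg]) hT.le
  have hmid := integral_integral_norm_expSum_sq_le (l := l) hcd y₀ T
  refine le_of_mul_le_mul_left ?_ (half_pos hT)
  linarith

theorem integral_norm_expSum_sq_le (hcd : ∀ a ∈ A, ‖c a‖ ≤ d a) (hT : 0 < T) {y₀ y₁ : ℝ}
    (hy : y₀ ≤ y₁) :
    ∫ y in y₀..y₁, ‖expSum A c l y‖ ^ 2 ≤
      8 * ((y₁ - y₀) / T + 1) * ∫ y in (0 : ℝ)..T, ‖expSum A (fun a => (d a : ℂ)) l y‖ ^ 2 := by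
  have hnonneg : 0 ≤ ∫ y in (0 : ℝ)..T, ‖expSum A (fun a => (d a : ℂ)) l y‖ ^ 2 :=
    integral_nonneg hT.le fun _ _ => by positivity
  refine (integral_le_of_windows (half_pos hT) (by fun_prop) (fun _ => by positivity)
    (integral_window_norm_expSum_sq_le hcd hT) hy).trans ?_
  rw [show (y₁ - y₀) / (T / 2) = 2 * ((y₁ - y₀) / T) by field_simp]
  nlinarith

theorem integral_norm_expSum_pow_four_le (hcd : ∀ a ∈ A, ‖c a‖ ≤ d a) (hT : 0 < T) {y₀ y₁ : ℝ}
    (hy : y₀ ≤ y₁) :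
    ∫ y in y₀..y₁, ‖expSum A c l y‖ ^ 4 ≤
      8 * ((y₁ - y₀) / T + 1) * ∫ y in (0 : ℝ)..T, ‖expSum A (fun a => (d a : ℂ)) l y‖ ^ 4 := by
  have hsq (c : ι → ℂ) (y : ℝ) : ‖expSum A c l y‖ ^ 4 =
      ‖expSum (A ×ˢ A) (fun q => c q.1 * c q.2) (fun q => l q.1 + l q.2) y‖ ^ 2 := by
    rw [← expSum_sq, norm_pow, ← pow_mul]
  simp only [hsq, ← Complex.ofReal_mul]
  refine integral_norm_expSum_sq_le (fun q hq => ?_) hT hy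
  obtain ⟨h₁, h₂⟩ := Finset.mem_product.1 hq
  rw [norm_mul]
  exact mul_le_mul (hcd _ h₁) (hcd _ h₂) (norm_nonneg _) ((norm_nonneg _).trans (hcd _ h₁))

theorem integral_norm_expSum_pow_four_le_of_subset {B : Finset ι} (hAB : A ⊆ B)
    (hcd : ∀ a ∈ A, ‖c a‖ ≤ d a) (hd : ∀ a ∈ B, 0 ≤ d a) (hT : 0 < T) {y₀ y₁ : ℝ} (hy : y₀ ≤ y₁) :
    ∫ y in y₀..y₁, ‖expSum A c l y‖ ^ 4 ≤
      8 * ((y₁ - y₀) / T + 1) * ∫ y in (0 : ℝ)..T, ‖expSum B (fun a => (d a : ℂ)) l y‖ ^ 4 := by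
  classical
  have hext (y : ℝ) : expSum A c l y = expSum B (fun a => if a ∈ A then c a else 0) l y := by
    simp only [expSum, ite_mul, zero_mul, Finset.sum_ite_mem, Finset.inter_eq_right.2 hAB]
  simp only [hext]
  refine integral_norm_expSum_pow_four_le (fun a ha => ?_) hT hy
  split_ifs with h
  · exact hcd a h
  · simpa using hd a ha

end MajorantPrinciple

section Minkowski

variable {a b c d : ℝ}

lemma intervalIntegral_integral_comm {F : ℝ → ℝ → ℝ} (hab : a ≤ b) (hcd : c ≤ d)
    (hF : ContinuousOn F.uncurry (Set.Icc a b ×ˢ Set.Icc c d)) :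
    IntervalIntegrable (fun y => ∫ s in a..b, F s y) volume c d ∧
      IntervalIntegrable (fun s => ∫ y in c..d, F s y) volume a b ∧
      ∫ y in c..d, ∫ s in a..b, F s y = ∫ s in a..b, ∫ y in c..d, F s y := by
  have hint : Integrable F.uncurry
      ((volume.restrict (Set.Ioc a b)).prod (volume.restrict (Set.Ioc c d))) := by
    rw [Measure.prod_restrict]
    exact (hF.integrableOn_compact (isCompact_Icc.prod isCompact_Icc)).mono_set
      (Set.prod_mono Set.Ioc_subset_Icc_self Set.Ioc_subset_Icc_self)
  simp only [integral_of_le hab, integral_of_le hcd, intervalIntegrable_iff_integrableOn_Ioc_of_le,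
    hab, hcd]
  exact ⟨hint.integral_prod_right, hint.integral_prod_left, (integral_integral_swap hint).symm⟩

lemma tangent_le_pow_succ_div_pow {g χ m : ℝ} (hg : 0 ≤ g) (hχ : 0 < χ) (hm : 0 < m) (n : ℕ) :
    m ^ (n + 1) * χ + (n + 1) * m ^ n * (g - m * χ) ≤ g ^ (n + 1) / χ ^ n := by
  have hbern := one_add_mul_le_pow (a := g / (m * χ) - 1)
    (by linarith [div_nonneg hg (mul_pos hm hχ).le]) (n + 1)
  calc m ^ (n + 1) * χ + (n + 1) * m ^ n * (g - m * χ)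
      = m ^ (n + 1) * χ * (1 + ((n + 1 : ℕ) : ℝ) * (g / (m * χ) - 1)) := by
        push_cast
        field_simp
        ring
    _ ≤ m ^ (n + 1) * χ * (1 + (g / (m * χ) - 1)) ^ (n + 1) := by gcongr
    _ = g ^ (n + 1) / χ ^ n := by
        rw [add_sub_cancel, div_pow, mul_pow]
        field_simp
        ring

lemma pow_succ_integral_le_mul_integral_div {g χ : ℝ → ℝ} (hab : a ≤ b)
    (hg : ContinuousOn g (Set.Icc a b)) (hg0 : ∀ s ∈ Set.Icc a b, 0 ≤ g s)
    (hχ : ContinuousOn χ (Set.Icc a b)) (hχ0 : ∀ s ∈ Set.Icc a b, 0 < χ s) (n : ℕ) :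
    (∫ s in a..b, g s) ^ (n + 1) ≤
      (∫ s in a..b, χ s) ^ n * ∫ s in a..b, g s ^ (n + 1) / χ s ^ n := by
  have hquot : ContinuousOn (fun s => g s ^ (n + 1) / χ s ^ n) (Set.Icc a b) :=
    (hg.pow _).div (hχ.pow _) fun s hs => (pow_pos (hχ0 s hs) n).ne'
  have hint {f : ℝ → ℝ} (hf : ContinuousOn f (Set.Icc a b)) : IntervalIntegrable f volume a b :=
    ContinuousOn.intervalIntegrable_of_Icc hab hf
  have hχint : 0 ≤ ∫ s in a..b, χ s := integral_nonneg hab fun s hs => (hχ0 s hs).le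
  rcases (integral_nonneg hab hg0).eq_or_lt with hK | hK
  · rw [← hK, zero_pow n.succ_ne_zero]
    refine mul_nonneg (pow_nonneg hχint n) (integral_nonneg hab fun s hs => ?_)
    exact div_nonneg (pow_nonneg (hg0 s hs) _) (pow_nonneg (hχ0 s hs).le _)
  have hlt : a < b := by
    refine hab.lt_of_ne fun h => hK.ne' ?_
    rw [h, integral_same]
  have hJ : 0 < ∫ s in a..b, χ s :=
    intervalIntegral_pos_of_pos_on (hint hχ) (fun s hs => hχ0 s (Set.Ioo_subset_Icc_self hs)) hlt
  set J := ∫ s in a..b, χ s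
  set K := ∫ s in a..b, g s
  set m := K / J
  have hm : 0 < m := div_pos hK hJ
  have hmJ : m * J = K := div_mul_cancel₀ K hJ.ne'
  have htangent : ∫ s in a..b, (m ^ (n + 1) * χ s + (n + 1) * m ^ n * (g s - m * χ s)) ≤
      ∫ s in a..b, g s ^ (n + 1) / χ s ^ n :=
    integral_mono_on hab (hint (by fun_prop)) (hint hquot)
      fun s hs => tangent_le_pow_succ_div_pow (hg0 s hs) (hχ0 s hs) hm n
  rw [intervalIntegral.integral_add (hint (by fun_prop)) (hint (by fun_prop)),
    intervalIntegral.integral_const_mul, intervalIntegral.integral_const_mul,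
    intervalIntegral.integral_sub (hint hg) (hint (by fun_prop)),
    intervalIntegral.integral_const_mul, hmJ, sub_self, mul_zero, add_zero] at htangent
  calc K ^ (n + 1) = J ^ n * (m ^ (n + 1) * J) := by rw [← hmJ]; ring
    _ ≤ _ := by gcongr

/-- Minkowski's inequality, with the `L^(n+1)` norm of each slice `G s` measured against `χ s`. -/
theorem integral_pow_succ_le_of_le_integral {G : ℝ → ℝ → ℝ} {F χ : ℝ → ℝ} {B : ℝ} {n : ℕ}
    (hab : a ≤ b) (hcd : c ≤ d)
    (hG : ContinuousOn G.uncurry (Set.Icc a b ×ˢ Set.Icc c d))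
    (hG0 : ∀ s ∈ Set.Icc a b, ∀ y ∈ Set.Icc c d, 0 ≤ G s y)
    (hχ : ContinuousOn χ (Set.Icc a b)) (hχ0 : ∀ s ∈ Set.Icc a b, 0 < χ s)
    (hB : ∀ s ∈ Set.Icc a b, ∫ y in c..d, G s y ^ (n + 1) ≤ χ s ^ (n + 1) * B)
    (hF0 : ∀ y ∈ Set.Icc c d, 0 ≤ F y) (hF : ∀ y ∈ Set.Icc c d, F y ≤ ∫ s in a..b, G s y) :
    ∫ y in c..d, F y ^ (n + 1) ≤ (∫ s in a..b, χ s) ^ (n + 1) * B := by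
  set J := ∫ s in a..b, χ s
  have hJ : 0 ≤ J := integral_nonneg hab fun s hs => (hχ0 s hs).le
  have hquot : ContinuousOn (fun s y => G s y ^ (n + 1) / χ s ^ n).uncurry
      (Set.Icc a b ×ˢ Set.Icc c d) :=
    (hG.pow _).div ((hχ.comp continuousOn_fst fun q hq => hq.1).pow _)
      fun q hq => (pow_pos (hχ0 q.1 hq.1) n).ne'
  obtain ⟨hint, hint', hswap⟩ := intervalIntegral_integral_comm hab hcd hquot
  calc ∫ y in c..d, F y ^ (n + 1)
      ≤ ∫ y in c..d, J ^ n * ∫ s in a..b, G s y ^ (n + 1) / χ s ^ n := by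
        rw [integral_of_le hcd, integral_of_le hcd]
        refine integral_mono_of_nonneg ?_ ((intervalIntegrable_iff_integrableOn_Ioc_of_le hcd).1
          (hint.const_mul _)) ?_ <;>
        refine (ae_restrict_iff' measurableSet_Ioc).2 (Eventually.of_forall fun y hy => ?_) <;>
        have hy' := Set.Ioc_subset_Icc_self hy
        · exact pow_nonneg (hF0 y hy') _
        · exact (pow_le_pow_left₀ (hF0 y hy') (hF y hy') _).trans <|
            pow_succ_integral_le_mul_integral_div hab (hG.uncurry_right y hy')
              (fun s hs => hG0 s hs y hy') hχ hχ0 n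
    _ = J ^ n * ∫ s in a..b, ∫ y in c..d, G s y ^ (n + 1) / χ s ^ n := by
        rw [intervalIntegral.integral_const_mul, hswap]
    _ ≤ J ^ n * ∫ s in a..b, χ s * B := by
        gcongr
        refine integral_mono_on hab hint' ((hχ.mul_const B).intervalIntegrable_of_Icc hab)
          fun s hs => ?_
        rw [intervalIntegral.integral_div, div_le_iff₀ (pow_pos (hχ0 s hs) n)]
        exact (hB s hs).trans_eq (by ring)
    _ = J ^ (n + 1) * B := by
        rw [intervalIntegral.integral_mul_const]
        ring

end Minkowski

lemma integral_add_pow_succ_le {a b : ℝ} {u v : ℝ → ℝ} {n : ℕ} (hab : a ≤ b)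
    (hu : ContinuousOn u (Set.Icc a b)) (hv : ContinuousOn v (Set.Icc a b))
    (hu0 : ∀ y ∈ Set.Icc a b, 0 ≤ u y) (hv0 : ∀ y ∈ Set.Icc a b, 0 ≤ v y) :
    ∫ y in a..b, (u y + v y) ^ (n + 1) ≤
      2 ^ n * ((∫ y in a..b, u y ^ (n + 1)) + ∫ y in a..b, v y ^ (n + 1)) := by
  have hint {F : ℝ → ℝ} (hF : ContinuousOn F (Set.Icc a b)) : IntervalIntegrable F volume a b :=
    hF.intervalIntegrable_of_Icc hab
  refine le_of_le_of_eq (b := ∫ y in a..b, 2 ^ n * (u y ^ (n + 1) + v y ^ (n + 1))) ?_ ?_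
  · exact integral_mono_on hab (hint (by fun_prop)) (hint (by fun_prop))
      fun y hy => add_pow_le (hu0 y hy) (hv0 y hy) (n + 1)
  · rw [intervalIntegral.integral_const_mul,
      intervalIntegral.integral_add (hint (by fun_prop)) (hint (by fun_prop))]

section VaryingCoefficients

variable {ι : Type*} {A : Finset ι} {y₀ y₁ K B : ℝ} {n : ℕ} {c c' f : ι → ℝ → ℂ}

lemma integral_norm_sum_pow_le_of_norm_coeff_le
    (hB : ∀ b : ι → ℂ, (∀ a ∈ A, ‖b a‖ ≤ 1) → ∫ y in y₀..y₁, ‖∑ a ∈ A, b a * f a y‖ ^ n ≤ B)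
    (hK : 0 < K) {b : ι → ℂ} (hb : ∀ a ∈ A, ‖b a‖ ≤ K) :
    ∫ y in y₀..y₁, ‖∑ a ∈ A, b a * f a y‖ ^ n ≤ K ^ n * B := by
  have hnorm : ‖(K : ℂ)‖ = K := by rw [Complex.norm_real, Real.norm_of_nonneg hK.le]
  have hunit := hB (fun a => b a / K) fun a ha => by
    rw [norm_div, hnorm]
    exact div_le_one_of_le₀ (hb a ha) hK.le
  simp only [div_mul_eq_mul_div, ← Finset.sum_div, norm_div, hnorm, div_pow,
    intervalIntegral.integral_div] at hunit
  rwa [div_le_iff₀ (by positivity), mul_comm] at hunit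

lemma norm_sum_mul_le_add_integral (hc : ∀ a ∈ A, ∀ y ∈ Set.Icc y₀ y₁, HasDerivAt (c a) (c' a y) y)
    (hc' : ∀ a ∈ A, ContinuousOn (c' a) (Set.Icc y₀ y₁)) {y : ℝ} (hy : y ∈ Set.Icc y₀ y₁)
    (z : ι → ℂ) :
    ‖∑ a ∈ A, c a y * z a‖ ≤
      ‖∑ a ∈ A, c a y₀ * z a‖ + ∫ s in y₀..y₁, ‖∑ a ∈ A, c' a s * z a‖ := by
  have hsub : Set.Icc y₀ y ⊆ Set.Icc y₀ y₁ := Set.Icc_subset_Icc_right hy.2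
  have hint (a : ι) (ha : a ∈ A) : IntervalIntegrable (c' a) volume y₀ y :=
    ((hc' a ha).mono hsub).intervalIntegrable_of_Icc hy.1
  have hftc (a : ι) (ha : a ∈ A) : ∫ s in y₀..y, c' a s = c a y - c a y₀ :=
    integral_eq_sub_of_hasDerivAt
      (fun s hs => hc a ha s (hsub (by rwa [Set.uIcc_of_le hy.1] at hs))) (hint a ha)
  have hsplit : ∑ a ∈ A, c a y * z a =
      ∑ a ∈ A, c a y₀ * z a + ∫ s in y₀..y, ∑ a ∈ A, c' a s * z a := by
    rw [intervalIntegral.integral_finsetSum fun a ha => (hint a ha).mul_const _,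
      ← Finset.sum_add_distrib]
    refine Finset.sum_congr rfl fun a ha => ?_
    rw [intervalIntegral.integral_mul_const, hftc a ha]
    ring
  have hcont : ContinuousOn (fun s => ‖∑ a ∈ A, c' a s * z a‖) (Set.Icc y₀ y₁) :=
    (continuousOn_finsetSum _ fun a ha => (hc' a ha).mul_const _).norm
  rw [hsplit]
  refine (norm_add_le _ _).trans ?_
  gcongr
  exact (intervalIntegral.norm_integral_le_integral_norm hy.1).trans <|
    integral_mono_interval le_rfl hy.1 hy.2 (Eventually.of_forall fun _ => norm_nonneg _)
      (hcont.intervalIntegrable_of_Icc (hy.1.trans hy.2))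

/-- Minkowski's inequality applied to `c_a(y) = c_a(y₀) + ∫ c_a'` removes the varying coefficients
without the logarithmic loss of completing the sum. -/
theorem integral_norm_sum_pow_succ_le_of_unit_coeff (hy : y₀ < y₁) (hK : 0 < K)
    (hf : ∀ a ∈ A, ContinuousOn (f a) (Set.Icc y₀ y₁))
    (hc : ∀ a ∈ A, ∀ y ∈ Set.Icc y₀ y₁, HasDerivAt (c a) (c' a y) y)
    (hc' : ∀ a ∈ A, ContinuousOn (c' a) (Set.Icc y₀ y₁))
    (hcK : ∀ a ∈ A, ‖c a y₀‖ ≤ K) (hc'K : ∀ a ∈ A, ∀ y ∈ Set.Icc y₀ y₁, ‖c' a y‖ ≤ K / (y₁ - y₀))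
    (hB : ∀ b : ι → ℂ, (∀ a ∈ A, ‖b a‖ ≤ 1) →
      ∫ y in y₀..y₁, ‖∑ a ∈ A, b a * f a y‖ ^ (n + 1) ≤ B) :
    ∫ y in y₀..y₁, ‖∑ a ∈ A, c a y * f a y‖ ^ (n + 1) ≤ (2 * K) ^ (n + 1) * B := by
  have hlen : 0 < y₁ - y₀ := sub_pos.2 hy
  set L := y₁ - y₀
  set G : ℝ → ℝ → ℝ := fun s y => ‖∑ a ∈ A, c a y₀ / L * f a y‖ + ‖∑ a ∈ A, c' a s * f a y‖
  have hcont (b : ι → ℂ) : ContinuousOn (fun y => ‖∑ a ∈ A, b a * f a y‖) (Set.Icc y₀ y₁) :=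
    (continuousOn_finsetSum _ fun a ha => (hf a ha).const_mul _).norm
  have hG : ContinuousOn G.uncurry (Set.Icc y₀ y₁ ×ˢ Set.Icc y₀ y₁) := by
    refine ((hcont _).comp continuousOn_snd fun q hq => hq.2).add (ContinuousOn.norm ?_)
    exact continuousOn_finsetSum _ fun a ha =>
      ((hc' a ha).comp continuousOn_fst fun q hq => hq.1).mul
        ((hf a ha).comp continuousOn_snd fun q hq => hq.2)
  have hunit (b : ι → ℂ) (hb : ∀ a ∈ A, ‖b a‖ ≤ K / L) :
      ∫ y in y₀..y₁, ‖∑ a ∈ A, b a * f a y‖ ^ (n + 1) ≤ (K / L) ^ (n + 1) * B :=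
    integral_norm_sum_pow_le_of_norm_coeff_le hB (div_pos hK hlen) hb
  have hGB (s : ℝ) (hs : s ∈ Set.Icc y₀ y₁) :
      ∫ y in y₀..y₁, G s y ^ (n + 1) ≤ (2 * K / L) ^ (n + 1) * B := by
    have h₀ := hunit (fun a => c a y₀ / L) fun a ha => by
      rw [norm_div, Complex.norm_real, Real.norm_of_nonneg hlen.le]
      exact div_le_div_of_nonneg_right (hcK a ha) hlen.le
    have h₁ := hunit (c' · s) fun a ha => hc'K a ha s hs
    refine (integral_add_pow_succ_le hy.le (hcont _) (hcont _) (fun _ _ => norm_nonneg _)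
      fun _ _ => norm_nonneg _).trans ?_
    refine (mul_le_mul_of_nonneg_left (add_le_add h₀ h₁) (by positivity)).trans_eq ?_
    rw [mul_div_assoc, mul_pow 2]
    ring
  have hmink := integral_pow_succ_le_of_le_integral (χ := fun _ => 2 * K / L)
    (F := fun y => ‖∑ a ∈ A, c a y * f a y‖) hy.le hy.le hG (fun _ _ _ _ => by positivity)
    continuousOn_const (fun _ _ => by positivity) hGB (fun _ _ => norm_nonneg _) fun y hyy => ?_
  · rwa [intervalIntegral.integral_const, smul_eq_mul, mul_div_cancel₀ _ hlen.ne'] at hmink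
  rw [intervalIntegral.integral_add intervalIntegrable_const
    (ContinuousOn.intervalIntegrable_of_Icc hy.le ?_), intervalIntegral.integral_const, smul_eq_mul]
  · refine (norm_sum_mul_le_add_integral hc hc' hyy _).trans_eq ?_
    congr 1
    simp only [div_mul_eq_mul_div, ← Finset.sum_div]
    rw [norm_div, Complex.norm_real, Real.norm_of_nonneg hlen.le, mul_div_cancel₀ _ hlen.ne']
  · exact (continuousOn_finsetSum _ fun a ha => (hc' a ha).mul_const _).norm

end VaryingCoefficients

lemma integral_comp_le_of_le_deriv {φ φ' F : ℝ → ℝ} {a b κ : ℝ} (hab : a ≤ b) (hκ : 0 < κ)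
    (hφ : ∀ x ∈ Set.Icc a b, HasDerivAt φ (φ' x) x) (hφ' : ContinuousOn φ' (Set.Icc a b))
    (hκφ : ∀ x ∈ Set.Icc a b, κ ≤ φ' x) (hF : Continuous F) (hF0 : ∀ x, 0 ≤ F x) :
    ∫ x in a..b, F (φ x) ≤ κ⁻¹ * ∫ y in (φ a)..(φ b), F y := by
  have hφc : ContinuousOn φ (Set.Icc a b) := fun x hx => (hφ x hx).continuousAt.continuousWithinAt
  have hFφ : ContinuousOn (fun x => F (φ x)) (Set.Icc a b) := hF.comp_continuousOn hφc
  have hIcc : Set.uIcc a b = Set.Icc a b := Set.uIcc_of_le hab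
  rw [inv_mul_eq_div, le_div_iff₀' hκ, ← intervalIntegral.integral_const_mul,
    ← integral_comp_mul_deriv (f' := φ') (fun x hx => hφ x (hIcc ▸ hx)) (by rwa [hIcc]) hF]
  refine integral_mono_on hab ((hFφ.const_mul κ).intervalIntegrable_of_Icc hab)
    ((hFφ.mul hφ').intervalIntegrable_of_Icc hab) fun x hx => ?_
  rw [Function.comp_apply, mul_comm]
  exact mul_le_mul_of_nonneg_left (hκφ x hx) (hF0 _)

section OscillatoryIntegrals

variable {a b : ℝ}

lemma integral_deriv_mul_e {u u' : ℝ → ℂ} {p p' : ℝ → ℝ} (hab : a ≤ b)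
    (hu : ∀ x ∈ Set.Icc a b, HasDerivAt u (u' x) x) (hu' : ContinuousOn u' (Set.Icc a b))
    (hp : ∀ x ∈ Set.Icc a b, HasDerivAt p (p' x) x) (hp' : ContinuousOn p' (Set.Icc a b))
    (hua : u a = 0) (hub : u b = 0) :
    ∫ x in a..b, u' x * e (p x) = -(2 * π * Complex.I) * ∫ x in a..b, u x * p' x * e (p x) := by
  have hpc : ContinuousOn p (Set.Icc a b) := fun x hx => (hp x hx).continuousAt.continuousWithinAt
  rw [← Set.uIcc_of_le hab] at hu hp
  have hibp := integral_deriv_mul_eq_sub hu (fun x hx => hasDerivAt_e_comp (hp x hx))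
    (hu'.intervalIntegrable_of_Icc hab)
    (ContinuousOn.intervalIntegrable_of_Icc hab (by fun_prop))
  rw [hua, hub, zero_mul, zero_mul, sub_zero, intervalIntegral.integral_add] at hibp
  · rw [eq_neg_of_add_eq_zero_left hibp, ← intervalIntegral.integral_const_mul,
      ← intervalIntegral.integral_neg]
    refine integral_congr fun x _ => ?_
    ring
  · exact ContinuousOn.intervalIntegrable_of_Icc hab (by fun_prop)
  · have huc : ContinuousOn u (Set.Icc a b) := fun x hx =>
      (hu x (Set.uIcc_of_le hab ▸ hx)).continuousAt.continuousWithinAt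
    exact ContinuousOn.intervalIntegrable_of_Icc hab (by fun_prop)

lemma integral_deriv_mul_e_of_mul_deriv_eq_one {u u' : ℝ → ℂ} {p p' q q' : ℝ → ℝ} (hab : a ≤ b)
    (hu : ∀ x ∈ Set.Icc a b, HasDerivAt u (u' x) x) (hu' : ContinuousOn u' (Set.Icc a b))
    (hp : ∀ x ∈ Set.Icc a b, HasDerivAt p (p' x) x) (hp' : ContinuousOn p' (Set.Icc a b))
    (hq : ∀ x ∈ Set.Icc a b, HasDerivAt q (q' x) x) (hq' : ContinuousOn q' (Set.Icc a b))
    (hpq : ∀ x ∈ Set.Icc a b, q x * p' x = 1) (hua : u a = 0) (hub : u b = 0) :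
    ∫ x in a..b, (q' x * u x + q x * u' x) * e (p x) =
      -(2 * π * Complex.I) * ∫ x in a..b, u x * e (p x) := by
  have huc : ContinuousOn u (Set.Icc a b) := fun x hx => (hu x hx).continuousAt.continuousWithinAt
  have hqc : ContinuousOn q (Set.Icc a b) := fun x hx => (hq x hx).continuousAt.continuousWithinAt
  rw [integral_deriv_mul_e hab (fun x hx => (hq x hx).ofReal_comp.mul (hu x hx)) (by fun_prop) hp
    hp'
    (by simp [hua]) (by simp [hub])]
  congr 1
  refine integral_congr fun x hx => ?_
  calc (q x * u x) * p' x * e (p x) = ((q x * p' x : ℝ) : ℂ) * (u x * e (p x)) := by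
        push_cast
        ring
    _ = u x * e (p x) := by
        rw [hpq x (Set.uIcc_of_le hab ▸ hx), Complex.ofReal_one, one_mul]

lemma norm_mul_add_mul_le {q q' q'' κ W : ℝ} {u u' u'' : ℂ}
    (hκ : |q| ≤ κ ∧ |q'| ≤ κ ∧ |q''| ≤ κ) (hW : ‖u‖ ≤ W ∧ ‖u'‖ ≤ W ∧ ‖u''‖ ≤ W) :
    ‖q' * (q' * u + q * u') + q * (q'' * u + q' * u' + (q' * u' + q * u''))‖ ≤
      6 * (κ ^ 2 * W) := by
  obtain ⟨hq, hq', hq''⟩ := hκ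
  obtain ⟨hu, hu', hu''⟩ := hW
  have hκ0 : 0 ≤ κ := (abs_nonneg _).trans hq
  have hterm {s t : ℝ} {z : ℂ} (hs : |s| ≤ κ) (ht : |t| ≤ κ) (hz : ‖z‖ ≤ W) :
      ‖(s * t * z : ℂ)‖ ≤ κ ^ 2 * W := by
    rw [norm_mul, norm_mul, Complex.norm_real, Complex.norm_real, norm_eq_abs, norm_eq_abs, sq]
    gcongr
  calc _ = ‖q' * q' * u + q' * q * u' + q * q'' * u + q * q' * u' + q * q' * u' + q * q * u''‖ := by
        ring_nf
    _ ≤ κ ^ 2 * W + κ ^ 2 * W + κ ^ 2 * W + κ ^ 2 * W + κ ^ 2 * W + κ ^ 2 * W :=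
        norm_add_le_of_le (norm_add_le_of_le (norm_add_le_of_le (norm_add_le_of_le
          (norm_add_le_of_le (hterm hq' hq' hu) (hterm hq' hq hu')) (hterm hq hq'' hu))
          (hterm hq hq' hu')) (hterm hq hq' hu')) (hterm hq hq hu'')
    _ = 6 * (κ ^ 2 * W) := by ring

lemma norm_integral_mul_e_le_of_mul_deriv_eq_one {u u' u'' : ℝ → ℂ} {p p' q q' q'' : ℝ → ℝ}
    {κ W : ℝ} (hab : a ≤ b)
    (hu : ∀ x ∈ Set.Icc a b, HasDerivAt u (u' x) x)
    (hu' : ∀ x ∈ Set.Icc a b, HasDerivAt u' (u'' x) x) (hu'' : ContinuousOn u'' (Set.Icc a b))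
    (hp : ∀ x ∈ Set.Icc a b, HasDerivAt p (p' x) x) (hp' : ContinuousOn p' (Set.Icc a b))
    (hq : ∀ x ∈ Set.Icc a b, HasDerivAt q (q' x) x)
    (hq' : ∀ x ∈ Set.Icc a b, HasDerivAt q' (q'' x) x) (hq'' : ContinuousOn q'' (Set.Icc a b))
    (hpq : ∀ x ∈ Set.Icc a b, q x * p' x = 1)
    (hua : u a = 0 ∧ u' a = 0) (hub : u b = 0 ∧ u' b = 0)
    (hκ : ∀ x ∈ Set.Icc a b, |q x| ≤ κ ∧ |q' x| ≤ κ ∧ |q'' x| ≤ κ)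
    (hW : ∀ x ∈ Set.Icc a b, ‖u x‖ ≤ W ∧ ‖u' x‖ ≤ W ∧ ‖u'' x‖ ≤ W) :
    ‖∫ x in a..b, u x * e (p x)‖ ≤ κ ^ 2 * W * (b - a) := by
  have huc : ContinuousOn u (Set.Icc a b) := fun x hx => (hu x hx).continuousAt.continuousWithinAt
  have huc' : ContinuousOn u' (Set.Icc a b) :=
    fun x hx => (hu' x hx).continuousAt.continuousWithinAt
  have hqc : ContinuousOn q (Set.Icc a b) := fun x hx => (hq x hx).continuousAt.continuousWithinAt
  have hqc' : ContinuousOn q' (Set.Icc a b) :=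
    fun x hx => (hq' x hx).continuousAt.continuousWithinAt
  have hfirst := integral_deriv_mul_e_of_mul_deriv_eq_one hab hu huc' hp hp' hq hqc' hpq
    hua.1 hub.1
  have hsecond := integral_deriv_mul_e_of_mul_deriv_eq_one
    (u := fun x => q' x * u x + q x * u' x) hab
    (fun x hx => ((hq' x hx).ofReal_comp.mul (hu x hx)).add
      ((hq x hx).ofReal_comp.mul (hu' x hx))) (by fun_prop) hp hp' hq hqc' hpq
    (by simp [hua]) (by simp [hub])
  have hbound := norm_integral_le_of_norm_le_const (a := a) (b := b)
    (f := fun x => (q' x * (q' x * u x + q x * u' x) +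
      q x * (q'' x * u x + q' x * u' x + (q' x * u' x + q x * u'' x))) * e (p x))
    fun x hx => by
      rw [norm_mul, norm_e, mul_one]
      have hx := Set.uIcc_of_le hab ▸ Set.uIoc_subset_uIcc hx
      exact norm_mul_add_mul_le (hκ x hx) (hW x hx)
  rw [hsecond, hfirst, norm_mul, norm_mul, ← mul_assoc, abs_of_nonneg (sub_nonneg.2 hab)] at hbound
  have hpi : 6 ≤ ‖-(2 * π * Complex.I)‖ * ‖-(2 * π * Complex.I)‖ := by
    have h : ‖-(2 * π * Complex.I)‖ = 2 * π := by simp [abs_of_pos pi_pos]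
    rw [h]
    nlinarith [pi_gt_three]
  nlinarith [norm_nonneg (∫ x in a..b, u x * e (p x))]

/-- The three quantities are the values of `1 / h`, `(1 / h)'` and `(1 / h)''`. -/
lemma abs_inv_derivs_le {K Λ h h' h'' : ℝ} (hK : 1 ≤ K) (hΛ : 0 < Λ) (hh : Λ ≤ |h|)
    (hh' : |h'| ≤ K * Λ) (hh'' : |h''| ≤ K * Λ) :
    |h⁻¹| ≤ 3 * K ^ 2 / Λ ∧ |-h' / h ^ 2| ≤ 3 * K ^ 2 / Λ ∧
      |(-h'' * h ^ 2 - -h' * (2 * h * h')) / (h ^ 2) ^ 2| ≤ 3 * K ^ 2 / Λ := by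
  have hpos : 0 < |h| := hΛ.trans_le hh
  have hne : h ≠ 0 := abs_pos.1 hpos
  have hKsq : K ≤ K ^ 2 := by nlinarith
  have hfirst : |h'| / |h| ^ 2 ≤ K / Λ := by
    calc |h'| / |h| ^ 2 ≤ K * Λ / Λ ^ 2 := by gcongr
      _ = K / Λ := by field_simp
  have hsecond : |h''| / |h| ^ 2 ≤ K / Λ := by
    calc |h''| / |h| ^ 2 ≤ K * Λ / Λ ^ 2 := by gcongr
      _ = K / Λ := by field_simp
  have hmixed : 2 * |h'| ^ 2 / |h| ^ 3 ≤ 2 * K ^ 2 / Λ := by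
    calc 2 * |h'| ^ 2 / |h| ^ 3 ≤ 2 * (K * Λ) ^ 2 / Λ ^ 3 := by gcongr
      _ = 2 * K ^ 2 / Λ := by field_simp
  refine ⟨?_, ?_, ?_⟩
  · rw [abs_inv, inv_le_comm₀ hpos (by positivity), inv_div, div_le_iff₀ (by positivity)]
    nlinarith
  · rw [abs_div, abs_neg, abs_pow]
    exact hfirst.trans (by gcongr; linarith)
  · rw [show (-h'' * h ^ 2 - -h' * (2 * h * h')) / (h ^ 2) ^ 2 =
      -(h'' / h ^ 2) + 2 * h' ^ 2 / h ^ 3 by field_simp; ring]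
    refine (abs_add_le _ _).trans ?_
    rw [abs_neg, abs_div, abs_div, abs_mul, abs_pow, abs_pow, abs_pow, abs_two]
    refine (add_le_add hsecond hmixed).trans ?_
    rw [← add_div]
    gcongr
    linarith

/-- First-derivative test of second order: each of two integrations by parts gains `K² / Λ`. -/
theorem norm_integral_mul_e_le_of_le_abs_deriv {u u' u'' : ℝ → ℂ} {p p' p'' p''' : ℝ → ℝ}
    {K Λ W : ℝ} (hab : a ≤ b) (hK : 1 ≤ K) (hΛ : 0 < Λ)
    (hu : ∀ x ∈ Set.Icc a b, HasDerivAt u (u' x) x)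
    (hu' : ∀ x ∈ Set.Icc a b, HasDerivAt u' (u'' x) x) (hu'' : ContinuousOn u'' (Set.Icc a b))
    (hp : ∀ x ∈ Set.Icc a b, HasDerivAt p (p' x) x)
    (hp' : ∀ x ∈ Set.Icc a b, HasDerivAt p' (p'' x) x)
    (hp'' : ∀ x ∈ Set.Icc a b, HasDerivAt p'' (p''' x) x) (hp''' : ContinuousOn p''' (Set.Icc a b))
    (hua : u a = 0 ∧ u' a = 0) (hub : u b = 0 ∧ u' b = 0)
    (hΛp : ∀ x ∈ Set.Icc a b, Λ ≤ |p' x|)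
    (hKp : ∀ x ∈ Set.Icc a b, |p'' x| ≤ K * Λ ∧ |p''' x| ≤ K * Λ)
    (hW : ∀ x ∈ Set.Icc a b, ‖u x‖ ≤ W ∧ ‖u' x‖ ≤ W ∧ ‖u'' x‖ ≤ W) :
    ‖∫ x in a..b, u x * e (p x)‖ ≤ (3 * K ^ 2 / Λ) ^ 2 * W * (b - a) := by
  have hne (x : ℝ) (hx : x ∈ Set.Icc a b) : p' x ≠ 0 :=
    abs_pos.1 (hΛ.trans_le (hΛp x hx))
  have hpc' : ContinuousOn p' (Set.Icc a b) :=
    fun x hx => (hp' x hx).continuousAt.continuousWithinAt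
  have hpc'' : ContinuousOn p'' (Set.Icc a b) :=
    fun x hx => (hp'' x hx).continuousAt.continuousWithinAt
  refine norm_integral_mul_e_le_of_mul_deriv_eq_one (q := fun x => (p' x)⁻¹)
    (q' := fun x => -p'' x / p' x ^ 2)
    (q'' := fun x => (-p''' x * p' x ^ 2 - -p'' x * (2 * p' x * p'' x)) / (p' x ^ 2) ^ 2)
    hab hu hu' hu'' hp hpc' (fun x hx => (hp' x hx).fun_inv (hne x hx)) (fun x hx => ?_)
    ?_ (fun x hx => inv_mul_cancel₀ (hne x hx)) hua hub (fun x hx => ?_) hW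
  · have h := ((hp' x hx).fun_pow 2)
    norm_num at h
    exact (hp'' x hx).fun_neg.fun_div h (pow_ne_zero 2 (hne x hx))
  · have hne' : ∀ x ∈ Set.Icc a b, (p' x ^ 2) ^ 2 ≠ 0 := fun x hx => by
      have := hne x hx
      positivity
    fun_prop (disch := assumption)
  · exact abs_inv_derivs_le hK hΛ (hΛp x hx) (hKp x hx).1 (hKp x hx).2

/-- The factor `χ = 1 / (1 + δ t²)` at `t = g'(x)`: it localises an integral with phase `λ g` to the
points where `√δ g'` is bounded, that is to a neighbourhood of the stationary points. -/
noncomputable def damping (δ t : ℝ) : ℝ := (1 + δ * t ^ 2)⁻¹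

lemma damping_pos {δ : ℝ} (hδ : 0 ≤ δ) (t : ℝ) : 0 < damping δ t := by
  unfold damping
  positivity

lemma hasDerivAt_mul_damping {g' : ℝ → ℝ} {g'' δ x : ℝ} (hδ : 0 ≤ δ) (hg' : HasDerivAt g' g'' x) :
    HasDerivAt (fun x => g' x * damping δ (g' x))
      (damping δ (g' x) * (g'' * ((1 - δ * g' x ^ 2) * damping δ (g' x)))) x := by
  have hne : 1 + δ * g' x ^ 2 ≠ 0 := by positivity
  have hsq := ((hg'.fun_pow 2).const_mul δ).const_add 1
  refine (hg'.fun_mul (hsq.fun_inv hne)).congr_deriv ?_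
  unfold damping
  field_simp
  ring

/-- Integration by parts against `δ χ g'` gains `1 / (1 + δ g'²)` at the cost of one derivative. -/
theorem integral_mul_e_eq_integral_damping {u u' : ℝ → ℂ} {g g' g'' : ℝ → ℝ} {δ t : ℝ}
    (hab : a ≤ b) (hδ : 0 ≤ δ) (ht : t ≠ 0)
    (hu : ∀ x ∈ Set.Icc a b, HasDerivAt u (u' x) x) (hu' : ContinuousOn u' (Set.Icc a b))
    (hg : ∀ x ∈ Set.Icc a b, HasDerivAt g (g' x) x)
    (hg' : ∀ x ∈ Set.Icc a b, HasDerivAt g' (g'' x) x) (hg'' : ContinuousOn g'' (Set.Icc a b))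
    (hua : u a = 0) (hub : u b = 0) :
    ∫ x in a..b, u x * e (t * g x) =
      ∫ x in a..b, damping δ (g' x) * (u x - δ / (2 * π * Complex.I * t) *
        (u' x * g' x + u x * g'' x * ((1 - δ * g' x ^ 2) * damping δ (g' x) : ℝ))) *
          e (t * g x) := by
  have huc : ContinuousOn u (Set.Icc a b) := fun x hx => (hu x hx).continuousAt.continuousWithinAt
  have hgc : ContinuousOn g (Set.Icc a b) := fun x hx => (hg x hx).continuousAt.continuousWithinAt
  have hgc' : ContinuousOn g' (Set.Icc a b) :=
    fun x hx => (hg' x hx).continuousAt.continuousWithinAt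
  have hne (x : ℝ) : 1 + δ * g' x ^ 2 ≠ 0 := by positivity
  have hdamp : ContinuousOn (fun x => damping δ (g' x)) (Set.Icc a b) :=
    ContinuousOn.inv₀ (by fun_prop) fun x _ => hne x
  have hibp := integral_deriv_mul_e hab
    (fun x hx => (hu x hx).fun_mul (hasDerivAt_mul_damping hδ (hg' x hx)).ofReal_comp)
    (by fun_prop) (fun x hx => (hg x hx).const_mul t) (by fun_prop) (by simp [hua]) (by simp [hub])
  have hci {F : ℝ → ℂ} (hF : ContinuousOn F (Set.Icc a b)) : IntervalIntegrable F volume a b :=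
    hF.intervalIntegrable_of_Icc hab
  set D : ℝ → ℂ := fun x => u' x * (g' x * damping δ (g' x) : ℝ) +
    u x * (damping δ (g' x) * (g'' x * ((1 - δ * g' x ^ 2) * damping δ (g' x))) : ℝ)
  have hD : ContinuousOn D (Set.Icc a b) := by fun_prop
  have ht' : (t : ℂ) ≠ 0 := by exact_mod_cast ht
  calc ∫ x in a..b, u x * e (t * g x)
      = ∫ x in a..b, (damping δ (g' x) * u x * e (t * g x) +
          δ / t * (u x * (g' x * damping δ (g' x) : ℝ) * (t * g' x : ℝ) * e (t * g x))) := by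
        refine integral_congr fun x _ => ?_
        have hone : (damping δ (g' x) * (1 + δ * g' x ^ 2) : ℂ) = 1 := by
          exact_mod_cast inv_mul_cancel₀ (hne x)
        push_cast
        field_simp
        linear_combination -(u x * e (t * g x)) * hone
    _ = (∫ x in a..b, damping δ (g' x) * u x * e (t * g x)) -
          δ / (2 * π * Complex.I * t) * ∫ x in a..b, D x * e (t * g x) := by
        rw [intervalIntegral.integral_add (hci (by fun_prop)) (hci (by fun_prop)),
          intervalIntegral.integral_const_mul, hibp]
        field_simp
        ring
    _ = _ := by
        rw [← intervalIntegral.integral_const_mul,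
          ← intervalIntegral.integral_sub (hci (by fun_prop)) (hci (by fun_prop))]
        refine integral_congr fun x _ => ?_
        simp only [D]
        push_cast
        ring

end OscillatoryIntegrals

section SmoothPhase

variable {U : ℝ → ℂ} {k r : ℝ}

/-- The `j`-th derivative of `v ↦ Y e^{kv} - x e^v`, which is the phase `Y t^k - x t` in the
logarithmic coordinate `t = e^v`. -/
noncomputable def expPhase (k Y x : ℝ) (j : ℕ) (v : ℝ) : ℝ :=
  Y * k ^ j * exp (k * v) - x * exp v

/-- The oscillatory integral `∫ w(t) e(Y t^k - x t) dt` in the logarithmic coordinate `t = e^v`,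
with `U(v) = e^v w(e^v)`. -/
noncomputable def oscInt (U : ℝ → ℂ) (k Y x : ℝ) : ℂ :=
  ∫ v, U v * e (expPhase k Y x 0 v)

lemma deriv_contDiff_one (hU : ContDiff ℝ 2 U) : ContDiff ℝ 1 (deriv U) :=
  ((contDiff_succ_iff_deriv (n := 1)).1 hU).2.2

lemma continuous_deriv_deriv (hU : ContDiff ℝ 2 U) : Continuous (deriv (deriv U)) :=
  (deriv_contDiff_one hU).continuous_deriv le_rfl

lemma hasDerivAt_of_contDiff_two (hU : ContDiff ℝ 2 U) (v : ℝ) : HasDerivAt U (deriv U v) v :=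
  (hU.differentiable two_ne_zero v).hasDerivAt

lemma hasDerivAt_deriv_of_contDiff_two (hU : ContDiff ℝ 2 U) (v : ℝ) :
    HasDerivAt (deriv U) (deriv (deriv U) v) v :=
  ((deriv_contDiff_one hU).differentiable one_ne_zero v).hasDerivAt

lemma hasCompactSupport_of_tsupport_subset_Ioo (hr : tsupport U ⊆ Set.Ioo (-r) r) :
    HasCompactSupport U :=
  HasCompactSupport.of_support_subset_isCompact isCompact_Icc
    ((subset_tsupport U).trans (hr.trans Set.Ioo_subset_Icc_self))

lemma exists_norm_derivs_le (hU : ContDiff ℝ 2 U) (hc : HasCompactSupport U) :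
    ∃ W > 0, ∀ v, ‖U v‖ ≤ W ∧ ‖deriv U v‖ ≤ W ∧ ‖deriv (deriv U) v‖ ≤ W := by
  obtain ⟨W₀, hW₀⟩ := hU.continuous.bounded_above_of_compact_support hc
  obtain ⟨W₁, hW₁⟩ := (deriv_contDiff_one hU).continuous.bounded_above_of_compact_support hc.deriv
  obtain ⟨W₂, hW₂⟩ := (continuous_deriv_deriv hU).bounded_above_of_compact_support hc.deriv.deriv
  have h₀ := (norm_nonneg _).trans (hW₀ 0)
  have h₁ := (norm_nonneg _).trans (hW₁ 0)
  have h₂ := (norm_nonneg _).trans (hW₂ 0)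
  refine ⟨W₀ + W₁ + W₂ + 1, by positivity, fun v => ?_⟩
  have := hW₀ v
  have := hW₁ v
  have := hW₂ v
  exact ⟨by linarith, by linarith, by linarith⟩

lemma eq_zero_of_notMem_Ioo (hr : tsupport U ⊆ Set.Ioo (-r) r) {v : ℝ} (hv : v ∉ Set.Ioo (-r) r) :
    U v = 0 ∧ deriv U v = 0 :=
  ⟨image_eq_zero_of_notMem_tsupport fun h => hv (hr h),
    Function.notMem_support.1 fun h => hv (hr (support_deriv_subset h))⟩

lemma integral_eq_of_tsupport_subset_Ioo (hr : tsupport U ⊆ Set.Ioo (-r) r) (f : ℝ → ℂ) :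
    ∫ v, U v * f v = ∫ v in (-r)..r, U v * f v := by
  refine (integral_eq_integral_of_support_subset fun v hv => ?_).symm
  exact Set.Ioo_subset_Ioc_self
    (hr (subset_tsupport U (Function.support_mul_subset_left _ _ hv)))

lemma oscInt_eq_intervalIntegral (hr : tsupport U ⊆ Set.Ioo (-r) r) (k Y x : ℝ) :
    oscInt U k Y x = ∫ v in (-r)..r, U v * e (expPhase k Y x 0 v) :=
  integral_eq_of_tsupport_subset_Ioo hr _

lemma hasDerivAt_expPhase (k Y x : ℝ) (j : ℕ) (v : ℝ) :
    HasDerivAt (expPhase k Y x j) (expPhase k Y x (j + 1) v) v := by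
  have h := ((((hasDerivAt_id v).const_mul k).exp.const_mul (Y * k ^ j)).sub
    ((hasDerivAt_exp v).const_mul x))
  refine h.congr_deriv ?_
  simp only [expPhase, id, pow_succ]
  ring

@[fun_prop]
lemma continuous_expPhase (k Y x : ℝ) (j : ℕ) : Continuous (expPhase k Y x j) :=
  continuous_iff_continuousAt.2 fun v => (hasDerivAt_expPhase k Y x j v).continuousAt

/-- For `|v| ≤ r` the derivative of `Y e^{kv} - x e^v` is at least a constant times `Y + |x|` unless
`stationaryLower k r * Y < x < stationaryUpper k r / 2 * Y`. -/
noncomputable def stationaryLower (k r : ℝ) : ℝ := k / 2 * exp (-((k - 1) * r))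

/-- See `stationaryLower`; the factor `4` makes one range of `x` serve all `Y` in a dyadic
interval. -/
noncomputable def stationaryUpper (k r : ℝ) : ℝ := 4 * k * exp ((k - 1) * r)

lemma stationaryLower_pos (hk : 0 < k) (r : ℝ) : 0 < stationaryLower k r := by
  unfold stationaryLower; positivity

lemma stationaryUpper_pos (hk : 0 < k) (r : ℝ) : 0 < stationaryUpper k r := by
  unfold stationaryUpper; positivity

lemma le_abs_expPhase_one (hk : 1 < k) {Y x v : ℝ} (hY : 0 < Y) (hv : v ∈ Set.Icc (-r) r)
    (hx : x ≤ stationaryLower k r * Y ∨ stationaryUpper k r / 2 * Y ≤ x) :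
    exp (-r) * (min (stationaryLower k r) 1 / 4) * (Y + |x|) ≤ |expPhase k Y x 1 v| := by
  set P := k * Y * exp ((k - 1) * v)
  have hphase : expPhase k Y x 1 v = exp v * (P - x) := by
    simp only [expPhase, P, show k * v = v + (k - 1) * v by ring, exp_add]
    ring
  have hPlower : 2 * (stationaryLower k r * Y) ≤ P := by
    have : exp (-((k - 1) * r)) ≤ exp ((k - 1) * v) := exp_le_exp.2 (by nlinarith [hv.1])
    calc 2 * (stationaryLower k r * Y) = k * Y * exp (-((k - 1) * r)) := by
          unfold stationaryLower; ring
      _ ≤ P := mul_le_mul_of_nonneg_left this (by positivity)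
  have hPupper : P ≤ stationaryUpper k r / 4 * Y := by
    have : exp ((k - 1) * v) ≤ exp ((k - 1) * r) := exp_le_exp.2 (by nlinarith [hv.2])
    calc P ≤ k * Y * exp ((k - 1) * r) := mul_le_mul_of_nonneg_left this (by positivity)
      _ = stationaryUpper k r / 4 * Y := by unfold stationaryUpper; ring
  have hc := stationaryLower_pos (zero_lt_one.trans hk) r
  have hdist : (stationaryLower k r * Y + |x|) / 4 ≤ |P - x| := by
    have := mul_pos hc hY
    rcases abs_cases x with h | h <;> rcases abs_cases (P - x) with h' | h' <;>
      rcases hx with hx | hx <;> linarith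
  rw [hphase, abs_mul, abs_of_pos (exp_pos v), mul_assoc]
  gcongr
  · exact hv.1
  · refine le_trans ?_ hdist
    have h₁ := min_le_left (stationaryLower k r) 1
    have h₂ := min_le_right (stationaryLower k r) 1
    nlinarith [abs_nonneg x]

lemma abs_expPhase_le (hk : 1 < k) {Y x v : ℝ} (hY : 0 < Y) (hr : 0 < r)
    (hv : v ∈ Set.Icc (-r) r) {j : ℕ} (hj : j ≤ 3) :
    |expPhase k Y x j v| ≤ k ^ 3 * exp (k * r) * (Y + |x|) := by
  have h₁ : |Y * k ^ j * exp (k * v)| ≤ Y * k ^ 3 * exp (k * r) := by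
    rw [abs_of_pos (by positivity)]
    gcongr
    exacts [hk.le, hv.2]
  have h₂ : |x * exp v| ≤ |x| * (k ^ 3 * exp (k * r)) := by
    rw [abs_mul, abs_of_pos (exp_pos v)]
    gcongr
    calc exp v ≤ exp (k * r) := exp_le_exp.2 (by nlinarith [hv.2])
      _ ≤ k ^ 3 * exp (k * r) := le_mul_of_one_le_left (exp_pos _).le (one_le_pow₀ hk.le)
  calc |expPhase k Y x j v| ≤ |Y * k ^ j * exp (k * v)| + |x * exp v| := abs_sub _ _
    _ ≤ k ^ 3 * exp (k * r) * (Y + |x|) := by linarith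

theorem exists_norm_oscInt_le_div_sq (hk : 1 < k) (hr : 0 < r) (hU : ContDiff ℝ 2 U)
    (hUr : tsupport U ⊆ Set.Ioo (-r) r) :
    ∃ C > 0, ∀ Y x : ℝ, 0 < Y →
      (x ≤ stationaryLower k r * Y ∨ stationaryUpper k r / 2 * Y ≤ x) →
      ‖oscInt U k Y x‖ ≤ C / (Y + |x|) ^ 2 := by
  have hk0 : 0 < k := zero_lt_one.trans hk
  obtain ⟨W, hW0, hW⟩ := exists_norm_derivs_le hU (hasCompactSupport_of_tsupport_subset_Ioo hUr)
  set κ := exp (-r) * (min (stationaryLower k r) 1 / 4)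
  have hκ : 0 < κ := by
    have := stationaryLower_pos hk0 r
    positivity
  set K := max 1 (k ^ 3 * exp (k * r) / κ)
  have hK : k ^ 3 * exp (k * r) ≤ K * κ := (div_le_iff₀ hκ).1 (le_max_right _ _)
  refine ⟨(3 * K ^ 2 / κ) ^ 2 * W * (2 * r), by positivity, fun Y x hY hx => ?_⟩
  have hS : 0 < Y + |x| := by positivity
  have hderiv (j : ℕ) (hj : j ≤ 3) (v : ℝ) (hv : v ∈ Set.Icc (-r) r) :
      |expPhase k Y x j v| ≤ K * (κ * (Y + |x|)) := by
    refine (abs_expPhase_le hk hY hr hv hj).trans ?_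
    rw [← mul_assoc]
    gcongr
  calc ‖oscInt U k Y x‖
      ≤ (3 * K ^ 2 / (κ * (Y + |x|))) ^ 2 * W * (r - -r) := by
        rw [oscInt_eq_intervalIntegral hUr]
        exact norm_integral_mul_e_le_of_le_abs_deriv (by linarith) (le_max_left _ _)
          (mul_pos hκ hS) (fun v _ => hasDerivAt_of_contDiff_two hU v)
          (fun v _ => hasDerivAt_deriv_of_contDiff_two hU v)
          (continuous_deriv_deriv hU).continuousOn
          (fun v _ => hasDerivAt_expPhase k Y x 0 v) (fun v _ => hasDerivAt_expPhase k Y x 1 v)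
          (fun v _ => hasDerivAt_expPhase k Y x 2 v) (continuous_expPhase k Y x 3).continuousOn
          (eq_zero_of_notMem_Ioo hUr (by simp)) (eq_zero_of_notMem_Ioo hUr (by simp))
          (fun v hv => le_abs_expPhase_one hk hY hv hx)
          (fun v hv => ⟨hderiv 2 (by norm_num) v hv, hderiv 3 le_rfl v hv⟩) (fun v _ => hW v)
    _ = (3 * K ^ 2 / κ) ^ 2 * W * (2 * r) / (Y + |x|) ^ 2 := by
        field_simp
        ring

end SmoothPhase

section PoissonSummation

/-- The weight `w(t) dt` in the logarithmic coordinate `t = e^v`. -/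
noncomputable def logWeight (w : ℝ → ℝ) (v : ℝ) : ℂ := (exp v * w (exp v) : ℝ)

/-- The frequencies of the exponential sum `∑ₘ e((m/M)^k y)`. -/
noncomputable def powFreq (k M : ℝ) (m : ℕ) : ℝ := (m / M) ^ k

/-- The natural numbers in the real interval `[a, b]`. -/
noncomputable def natIcc (a b : ℝ) : Finset ℕ := Finset.Icc ⌈a⌉₊ ⌊b⌋₊

lemma mem_natIcc {a b : ℝ} (hb : 0 ≤ b) {m : ℕ} : m ∈ natIcc a b ↔ a ≤ m ∧ (m : ℝ) ≤ b := by
  rw [natIcc, Finset.mem_Icc, Nat.ceil_le, Nat.le_floor_iff hb]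

/-- The frequencies `ν` for which the phase `Y t^k - νMt` can be stationary, `Y₀ ≤ Y ≤ 2Y₀`. -/
noncomputable def dualRange (k r Y₀ M : ℝ) : Finset ℕ :=
  natIcc (stationaryLower k r * Y₀ / M) (stationaryUpper k r * Y₀ / M)

lemma sum_range_eq_tsum_fourier {f : ℝ → ℂ} (hf : Continuous f) {N : ℕ}
    (hN : ∀ x ∉ Set.Ioo (0 : ℝ) N, f x = 0) (hs : Summable fun ν : ℤ => 𝓕 f (ν : ℝ)) :
    ∑ n ∈ Finset.range N, f n = ∑' ν : ℤ, 𝓕 f (ν : ℝ) := by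
  have hdecay : f =O[cocompact ℝ] fun x => |x| ^ (-(2 : ℝ)) := by
    refine Asymptotics.IsBigO.of_bound 0 ?_
    filter_upwards [(isCompact_Icc (a := (0 : ℝ)) (b := N)).compl_mem_cocompact] with x hx
    simp [hN x fun h => hx (Set.Ioo_subset_Icc_self h)]
  have hpoisson := Real.tsum_eq_tsum_fourier_of_rpow_decay_of_summable hf one_lt_two hdecay hs 0
  simp only [zero_add, QuotientAddGroup.mk_zero, fourier_eval_zero, mul_one] at hpoisson
  rw [← hpoisson, tsum_eq_sum (s := (Finset.range N).map Nat.castEmbedding)]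
  · simp
  · intro n hn
    refine hN _ fun h => hn ?_
    have hpos : 0 < n := by exact_mod_cast h.1
    have hlt : n < N := by exact_mod_cast h.2
    exact Finset.mem_map.2 ⟨n.toNat, by simp; omega, by simp; omega⟩

lemma integral_Ioi_zero_eq_integral_exp (f : ℝ → ℂ) :
    ∫ t in Set.Ioi 0, f t = ∫ v, (exp v : ℂ) * f (exp v) := by
  have h := integral_image_eq_integral_abs_deriv_smul MeasurableSet.univ
    (fun v _ => (hasDerivAt_exp v).hasDerivWithinAt) exp_injective.injOn f
  simpa [Set.image_univ, Real.range_exp] using h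

variable {w : ℝ → ℝ} {k r : ℝ}

/-- The smoothed sum `∑ₘ w(m/M) e((m/M)^k Y)`; all its terms are in the range when `w` is supported
in `(e^{-r}, e^r)`. -/
noncomputable def smoothSum (w : ℝ → ℝ) (k r M Y : ℝ) : ℂ :=
  expSum (Finset.range ⌈exp r * M⌉₊) (fun m => (w (m / M) : ℂ)) (powFreq k M) Y

lemma contDiff_logWeight (hw : ContDiff ℝ 2 w) : ContDiff ℝ 2 (logWeight w) :=
  Complex.ofRealCLM.contDiff.comp (contDiff_exp.mul (hw.comp contDiff_exp))

lemma tsupport_logWeight_subset (hwr : tsupport w ⊆ Set.Ioo (exp (-r)) (exp r)) :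
    tsupport (logWeight w) ⊆ Set.Ioo (-r) r := by
  have hclosed : IsClosed (exp ⁻¹' tsupport w) := (isClosed_tsupport w).preimage continuous_exp
  have hsub : Function.support (logWeight w) ⊆ exp ⁻¹' tsupport w := fun v hv =>
    subset_tsupport w fun h => hv (by simp [logWeight, h])
  intro v hv
  have := hwr (closure_minimal hsub hclosed hv)
  exact ⟨exp_lt_exp.1 this.1, exp_lt_exp.1 this.2⟩

lemma weight_eq_zero (hwr : tsupport w ⊆ Set.Ioo (exp (-r)) (exp r)) {t : ℝ}
    (ht : t ∉ Set.Ioo 0 (exp r)) : w t = 0 :=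
  image_eq_zero_of_notMem_tsupport fun h =>
    ht ⟨(exp_pos _).trans (hwr h).1, (hwr h).2⟩

lemma integral_weight_mul_e_eq_oscInt (hwr : tsupport w ⊆ Set.Ioo (exp (-r)) (exp r))
    (k Y x : ℝ) :
    ∫ t, w t * e (Y * t ^ k - x * t) = oscInt (logWeight w) k Y x := by
  rw [← setIntegral_eq_integral_of_forall_compl_eq_zero (s := Set.Ioi 0),
    integral_Ioi_zero_eq_integral_exp, oscInt]
  · congr! 2 with v
    simp only [logWeight, expPhase, ← exp_mul, mul_comm v k]
    push_cast
    ring_nf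
  · intro t ht
    simp [weight_eq_zero hwr fun h => ht h.1]

lemma fourier_weight_mul_e (hwr : tsupport w ⊆ Set.Ioo (exp (-r)) (exp r)) (k Y : ℝ) {M : ℝ}
    (hM : 0 < M) (ν : ℝ) :
    𝓕 (fun x : ℝ => (w (x / M) : ℂ) * e ((x / M) ^ k * Y)) ν =
      M * oscInt (logWeight w) k Y (ν * M) := by
  have hrescale (x : ℝ) :
      Complex.exp (↑(-2 * π * x * ν) * Complex.I) • ((w (x / M) : ℂ) * e ((x / M) ^ k * Y)) =
        (fun t : ℝ => w t * e (Y * t ^ k - ν * M * t)) (x / M) := by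
    have hchar : Complex.exp (↑(-2 * π * x * ν) * Complex.I) = e (-(ν * x)) := by
      rw [e]; congr 1; push_cast; ring
    rw [hchar, smul_eq_mul, mul_left_comm, ← e_add]
    congr 2
    field_simp
    ring
  simp_rw [Real.fourier_real_eq_integral_exp_smul, hrescale]
  rw [Measure.integral_comp_div (fun t : ℝ => (w t : ℂ) * e (Y * t ^ k - ν * M * t)) M,
    abs_of_pos hM, Complex.real_smul, integral_weight_mul_e_eq_oscInt hwr]

theorem smoothSum_eq_tsum_oscInt (hk : 0 ≤ k) (hw : Continuous w)
    (hwr : tsupport w ⊆ Set.Ioo (exp (-r)) (exp r)) {M : ℝ} (hM : 0 < M) (Y : ℝ)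
    (hs : Summable fun ν : ℤ => oscInt (logWeight w) k Y (ν * M)) :
    smoothSum w k r M Y = M * ∑' ν : ℤ, oscInt (logWeight w) k Y (ν * M) := by
  have hf : Continuous fun x : ℝ => (w (x / M) : ℂ) * e ((x / M) ^ k * Y) := by
    have : Continuous fun x : ℝ => (x / M) ^ k :=
      (continuous_id.div_const M).rpow_const fun _ => Or.inr hk
    fun_prop
  have hpoisson := sum_range_eq_tsum_fourier hf (N := ⌈exp r * M⌉₊) (fun x hx => ?_)
    (by simpa only [fourier_weight_mul_e hwr k Y hM] using hs.mul_left (M : ℂ))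
  · simpa only [smoothSum, expSum, powFreq, fourier_weight_mul_e hwr k Y hM, tsum_mul_left]
      using hpoisson
  · rw [weight_eq_zero hwr fun h => hx ⟨?_, ?_⟩, Complex.ofReal_zero, zero_mul]
    · exact (div_pos_iff_of_pos_right hM).1 h.1
    · exact ((div_lt_iff₀ hM).1 h.2).trans_le (Nat.le_ceil _)

lemma norm_tsum_sub_sum_le_of_norm_le {ι : Type*} {F : ι → ℂ} {g : ι → ℝ} (s : Finset ι)
    (hg : Summable g) (hg0 : ∀ i, 0 ≤ g i) (hF : ∀ i ∉ s, ‖F i‖ ≤ g i) :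
    Summable F ∧ ‖∑' i, F i - ∑ i ∈ s, F i‖ ≤ ∑' i, g i := by
  have hF' (i : ↥(↑s : Set ι)ᶜ) : ‖F i‖ ≤ g i := hF i i.2
  have hgs : Summable fun i : ↥(↑s : Set ι)ᶜ => g i := hg.subtype _
  have hs : Summable F :=
    (Finset.summable_compl_iff s).1 (Summable.of_norm_bounded hgs hF')
  refine ⟨hs, ?_⟩
  rw [← hs.sum_add_tsum_compl (s := s), add_sub_cancel_left]
  exact (tsum_of_norm_bounded hgs.hasSum hF').trans (hg.tsum_subtype_le _ _ hg0)

/-- The bound for `(Y₀ + |ν|M)⁻²` that is summable over `ν ∈ ℤ` for every `M > 0`. -/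
noncomputable def tailBound (Y₀ M : ℝ) (ν : ℤ) : ℝ :=
  (if ν = 0 then 1 / Y₀ ^ 2 else 0) + 1 / M ^ 2 * (1 / (ν : ℝ) ^ 2)

lemma tailBound_nonneg (Y₀ M : ℝ) (ν : ℤ) : 0 ≤ tailBound Y₀ M ν := by
  unfold tailBound; positivity

lemma hasSum_tailBound (Y₀ M : ℝ) :
    HasSum (tailBound Y₀ M) (1 / Y₀ ^ 2 + 1 / M ^ 2 * ∑' ν : ℤ, 1 / (ν : ℝ) ^ 2) :=
  (hasSum_ite_eq 0 _).add
    ((Real.summable_one_div_int_pow.2 one_lt_two).hasSum.mul_left _)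

lemma one_div_sq_le_tailBound {Y₀ Y M : ℝ} (hY₀ : 0 < Y₀) (hY : Y₀ ≤ Y) (hM : 0 < M) (ν : ℤ) :
    1 / (Y + |ν * M|) ^ 2 ≤ tailBound Y₀ M ν := by
  unfold tailBound
  rcases eq_or_ne ν 0 with rfl | hν
  · simpa using inv_anti₀ (by positivity) (pow_le_pow_left₀ hY₀.le hY 2)
  · have hν' : (ν : ℝ) ≠ 0 := by exact_mod_cast hν
    calc 1 / (Y + |ν * M|) ^ 2 ≤ 1 / |ν * M| ^ 2 := by
          gcongr
          linarith
      _ = _ := by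
          rw [if_neg hν, zero_add, sq_abs]
          field_simp

lemma mem_dualRange_of_lt (hk : 0 < k) {Y₀ M : ℝ} (hY₀ : 0 < Y₀) (hM : 0 < M) {ν : ℤ}
    (h₁ : stationaryLower k r * Y₀ < ν * M) (h₂ : ν * M < stationaryUpper k r * Y₀) :
    ν ∈ (dualRange k r Y₀ M).map Nat.castEmbedding := by
  have hc := stationaryUpper_pos hk r
  have hpos : (0 : ℝ) < ν * M := lt_trans (by have := stationaryLower_pos hk r; positivity) h₁
  have hν : 0 ≤ ν := by exact_mod_cast (pos_of_mul_pos_left hpos hM.le).le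
  have hcast : ((ν.toNat : ℕ) : ℝ) = ν := by exact_mod_cast Int.toNat_of_nonneg hν
  refine Finset.mem_map.2 ⟨ν.toNat, (mem_natIcc (by positivity)).2 ?_, by simpa using hν⟩
  rw [hcast, div_le_iff₀ hM, le_div_iff₀ hM]
  exact ⟨h₁.le, h₂.le⟩

theorem exists_norm_smoothSum_sub_sum_oscInt_le (hk : 1 < k) (hr : 0 < r)
    (hw : ContDiff ℝ 2 w) (hwr : tsupport w ⊆ Set.Ioo (exp (-r)) (exp r)) :
    ∃ C > 0, ∀ Y₀ Y M : ℝ, 0 < Y₀ → Y ∈ Set.Icc Y₀ (2 * Y₀) → 0 < M →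
      ‖smoothSum w k r M Y -
        M * ∑ ν ∈ dualRange k r Y₀ M, oscInt (logWeight w) k Y (ν * M)‖
        ≤ C * (M / Y₀ ^ 2 + 1 / M) := by
  have hk0 : 0 < k := zero_lt_one.trans hk
  obtain ⟨C, hC, hdecay⟩ := exists_norm_oscInt_le_div_sq hk hr (contDiff_logWeight hw)
    (tsupport_logWeight_subset hwr)
  set Z := ∑' ν : ℤ, 1 / (ν : ℝ) ^ 2
  have hZ : 0 ≤ Z := tsum_nonneg fun ν => by positivity
  refine ⟨C * (1 + Z), by positivity, fun Y₀ Y M hY₀ hY hM => ?_⟩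
  have hYpos := hY₀.trans_le hY.1
  have hoff (ν : ℤ) (hν : ν ∉ (dualRange k r Y₀ M).map Nat.castEmbedding) :
      ‖oscInt (logWeight w) k Y (ν * M)‖ ≤ C * tailBound Y₀ M ν := by
    have hν' : ν * M ≤ stationaryLower k r * Y ∨ stationaryUpper k r / 2 * Y ≤ ν * M := by
      have h₁ := stationaryLower_pos hk0 r
      have h₂ := stationaryUpper_pos hk0 r
      by_contra! h
      refine hν (mem_dualRange_of_lt hk0 hY₀ hM (lt_of_le_of_lt ?_ h.1) (h.2.trans_le ?_)) <;>
        nlinarith [hY.1, hY.2]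
    calc _ ≤ C / (Y + |ν * M|) ^ 2 := hdecay Y _ hYpos hν'
      _ = C * (1 / (Y + |ν * M|) ^ 2) := by ring
      _ ≤ _ := by gcongr; exact one_div_sq_le_tailBound hY₀ hY.1 hM ν
  have htail := (hasSum_tailBound Y₀ M).mul_left C
  obtain ⟨hs, htrunc⟩ := norm_tsum_sub_sum_le_of_norm_le _ htail.summable
    (fun ν => mul_nonneg hC.le (tailBound_nonneg Y₀ M ν)) hoff
  rw [htail.tsum_eq, Finset.sum_map] at htrunc
  rw [smoothSum_eq_tsum_oscInt hk0.le hw.continuous hwr hM Y hs, ← mul_sub, norm_mul,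
    Complex.norm_real, Real.norm_of_nonneg hM.le]
  calc _ ≤ M * (C * (1 / Y₀ ^ 2 + 1 / M ^ 2 * Z)) := by gcongr; exact htrunc
    _ = C * (M / Y₀ ^ 2 + Z * (1 / M)) := by field_simp
    _ ≤ C * (1 + Z) * (M / Y₀ ^ 2 + 1 / M) := by
        have h₁ : 0 ≤ Z * (M / Y₀ ^ 2) := by positivity
        have h₂ : 0 ≤ 1 / M := by positivity
        rw [mul_assoc]
        gcongr
        linarith

end PoissonSummation

section StationaryPhase

variable {U : ℝ → ℂ} {k r : ℝ}

/-- The logarithm of the stationary point `(x / (kY))^{1/(k-1)}` of `Y t^k - x t`. -/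
noncomputable def logSaddle (k x Y : ℝ) : ℝ := (log (x / k) - log Y) / (k - 1)

/-- A bound for `|logSaddle k x Y|` when `Y ∈ [Y₀, 2Y₀]` and `x = νM` with
`ν ∈ dualRange k r Y₀ M`. -/
noncomputable def saddleRadius (k r : ℝ) : ℝ := r + log 4 / (k - 1)

lemma exp_mul_logSaddle (hk : 1 < k) {x Y : ℝ} (hx : 0 < x) (hY : 0 < Y) :
    exp ((k - 1) * logSaddle k x Y) = x / k / Y := by
  rw [logSaddle, mul_div_cancel₀ _ (by linarith), exp_sub, exp_log (by positivity), exp_log hY]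

lemma hasDerivAt_logSaddle (k x : ℝ) {Y : ℝ} (hY : Y ≠ 0) :
    HasDerivAt (logSaddle k x) (-Y⁻¹ / (k - 1)) Y :=
  ((hasDerivAt_log hY).const_sub (log (x / k))).div_const (k - 1)

lemma abs_logSaddle_le (hk : 1 < k) {x Y Y₀ : ℝ} (hY₀ : 0 < Y₀) (hY : Y ∈ Set.Icc Y₀ (2 * Y₀))
    (hx : x ∈ Set.Icc (stationaryLower k r * Y₀) (stationaryUpper k r * Y₀)) :
    |logSaddle k x Y| ≤ saddleRadius k r := by
  have hk0 : 0 < k := zero_lt_one.trans hk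
  have hk1 : 0 < k - 1 := by linarith
  have hYpos := hY₀.trans_le hY.1
  have hxpos : 0 < x := lt_of_lt_of_le (by have := stationaryLower_pos hk0 r; positivity) hx.1
  have hratio : 0 < x / k / Y := by positivity
  have hlog : |log (x / k / Y)| ≤ (k - 1) * r + log 4 := by
    rw [abs_le, le_log_iff_exp_le hratio, log_le_iff_le_exp hratio, neg_add, exp_add, exp_add,
      exp_neg (log 4), exp_log (by norm_num), le_div_iff₀ hYpos, le_div_iff₀ hk0,
      div_le_iff₀ hYpos, div_le_iff₀ hk0]
    unfold stationaryLower stationaryUpper at hx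
    constructor
    · refine le_trans ?_ hx.1
      have : 0 < exp (-((k - 1) * r)) * k := by positivity
      nlinarith [hY.2]
    · refine hx.2.trans ?_
      have : 0 < exp ((k - 1) * r) * k := by positivity
      nlinarith [hY.1]
  rw [log_div (by positivity) hYpos.ne'] at hlog
  rw [logSaddle, abs_div, abs_of_pos hk1, div_le_iff₀ hk1, saddleRadius]
  refine hlog.trans_eq ?_
  field_simp

/-- The amplitude left by one damped integration by parts at a stationary point; `ℓ` is the
logarithm of the stationary point. -/
noncomputable def saddleAmp (U : ℝ → ℂ) (κ b₁ b₂ v ℓ : ℝ) : ℂ :=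
  U (v + ℓ) - κ * exp (-ℓ) / (2 * π * Complex.I) * (deriv U (v + ℓ) * b₁ + U (v + ℓ) * b₂)

/-- The derivative of `saddleAmp` in `ℓ`. -/
noncomputable def saddleAmpDeriv (U : ℝ → ℂ) (κ b₁ b₂ v ℓ : ℝ) : ℂ :=
  saddleAmp (deriv U) κ b₁ b₂ v ℓ +
    κ * exp (-ℓ) / (2 * π * Complex.I) * (deriv U (v + ℓ) * b₁ + U (v + ℓ) * b₂)

lemma hasDerivAt_saddleAmp (hU : ContDiff ℝ 2 U) (κ b₁ b₂ v ℓ : ℝ) :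
    HasDerivAt (saddleAmp U κ b₁ b₂ v) (saddleAmpDeriv U κ b₁ b₂ v ℓ) ℓ := by
  have h₀ := (hasDerivAt_of_contDiff_two hU (v + ℓ)).comp_const_add v ℓ
  have h₁ := (hasDerivAt_deriv_of_contDiff_two hU (v + ℓ)).comp_const_add v ℓ
  have hexp : HasDerivAt (fun ℓ : ℝ => (exp (-ℓ) : ℂ)) (-exp (-ℓ) : ℝ) ℓ := by
    simpa using ((hasDerivAt_id ℓ).neg.exp).ofReal_comp
  refine (h₀.sub (((hexp.const_mul (κ : ℂ)).div_const (2 * π * Complex.I)).mul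
    ((h₁.mul_const (b₁ : ℂ)).add (h₀.mul_const (b₂ : ℂ))))).congr_deriv ?_
  simp only [saddleAmpDeriv, saddleAmp, Pi.add_apply]
  push_cast
  ring

lemma norm_correction_le {κ b₁ b₂ ℓ K G L W : ℝ} {z₁ z₂ : ℂ} (hκ : |κ| ≤ K) (hb₁ : |b₁| ≤ G)
    (hb₂ : |b₂| ≤ G) (hℓ : |ℓ| ≤ L) (hz₁ : ‖z₁‖ ≤ W) (hz₂ : ‖z₂‖ ≤ W) :
    ‖κ * exp (-ℓ) / (2 * π * Complex.I) * (z₁ * b₁ + z₂ * b₂)‖ ≤ K * exp L * (2 * W * G) := by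
  have hexp : exp (-ℓ) ≤ exp L := exp_le_exp.2 (by linarith [(abs_le.1 hℓ).1])
  have hpi : 1 ≤ 2 * π := by linarith [pi_gt_three]
  have hW : 0 ≤ W := (norm_nonneg _).trans hz₁
  have hK : 0 ≤ K := (abs_nonneg _).trans hκ
  have hfactor : ‖(κ * exp (-ℓ) / (2 * π * Complex.I) : ℂ)‖ ≤ K * exp L := by
    have : ‖(κ * exp (-ℓ) / (2 * π * Complex.I) : ℂ)‖ = |κ| * exp (-ℓ) / (2 * π) := by
      simp [abs_of_pos pi_pos, Complex.norm_exp]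
    rw [this]
    exact (div_le_self (by positivity) hpi).trans (by gcongr)
  have hsum : ‖z₁ * b₁ + z₂ * b₂‖ ≤ 2 * W * G := calc
    ‖z₁ * b₁ + z₂ * b₂‖ ≤ ‖z₁‖ * |b₁| + ‖z₂‖ * |b₂| := by
      simpa using norm_add_le (z₁ * b₁) (z₂ * b₂)
    _ ≤ W * G + W * G := by gcongr
    _ = 2 * W * G := by ring
  rw [norm_mul]
  gcongr

lemma norm_saddleAmp_le {κ b₁ b₂ v ℓ K G L W : ℝ} (hκ : |κ| ≤ K) (hb₁ : |b₁| ≤ G)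
    (hb₂ : |b₂| ≤ G) (hℓ : |ℓ| ≤ L) (hU : ‖U (v + ℓ)‖ ≤ W) (hU' : ‖deriv U (v + ℓ)‖ ≤ W) :
    ‖saddleAmp U κ b₁ b₂ v ℓ‖ ≤ W + K * exp L * (2 * W * G) :=
  (norm_sub_le _ _).trans (add_le_add hU (norm_correction_le hκ hb₁ hb₂ hℓ hU' hU))

lemma norm_saddleAmpDeriv_le {κ b₁ b₂ v ℓ K G L W : ℝ} (hκ : |κ| ≤ K) (hb₁ : |b₁| ≤ G)
    (hb₂ : |b₂| ≤ G) (hℓ : |ℓ| ≤ L)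
    (hW : ‖U (v + ℓ)‖ ≤ W ∧ ‖deriv U (v + ℓ)‖ ≤ W ∧ ‖deriv (deriv U) (v + ℓ)‖ ≤ W) :
    ‖saddleAmpDeriv U κ b₁ b₂ v ℓ‖ ≤ W + K * exp L * (4 * W * G) := by
  have h₁ := norm_saddleAmp_le hκ hb₁ hb₂ hℓ hW.2.1 hW.2.2
  have h₂ := norm_correction_le hκ hb₁ hb₂ hℓ hW.2.1 hW.1
  refine (norm_add_le _ _).trans ((add_le_add h₁ h₂).trans_eq ?_)
  ring

lemma expPhase_add_logSaddle (hk : 1 < k) {x Y : ℝ} (hx : 0 < x) (hY : 0 < Y) (v : ℝ) :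
    expPhase k Y x 0 (v + logSaddle k x Y) =
      Y * exp (k * logSaddle k x Y) * expPhase k 1 k 0 v := by
  have hsaddle : x = k * Y * exp ((k - 1) * logSaddle k x Y) := by
    rw [exp_mul_logSaddle hk hx hY]
    field_simp
  have hexp : exp (k * logSaddle k x Y) =
      exp ((k - 1) * logSaddle k x Y) * exp (logSaddle k x Y) := by
    rw [← exp_add]
    ring_nf
  simp only [expPhase, mul_add, exp_add]
  linear_combination -(exp v * exp (logSaddle k x Y)) * hsaddle + k * Y * exp v * hexp

/-- The coefficient of `U` produced when a damped integration by parts differentiates `χ g'`, for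
the phase `g = expPhase k 1 k 0`. -/
noncomputable def dampedCurvature (k δ v : ℝ) : ℝ :=
  expPhase k 1 k 2 v *
    ((1 - δ * expPhase k 1 k 1 v ^ 2) * damping δ (expPhase k 1 k 1 v))

lemma abs_dampedCurvature_le {δ : ℝ} (hδ : 0 ≤ δ) (v : ℝ) :
    |dampedCurvature k δ v| ≤ |expPhase k 1 k 2 v| := by
  rw [dampedCurvature, abs_mul]
  refine mul_le_of_le_one_right (abs_nonneg _) ?_
  have hs : 0 ≤ δ * expPhase k 1 k 1 v ^ 2 := by positivity
  have hpos : 0 < 1 + δ * expPhase k 1 k 1 v ^ 2 := by positivity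
  rw [damping, ← div_eq_mul_inv, abs_div, abs_of_pos hpos, div_le_one hpos, abs_le]
  constructor <;> linarith

@[fun_prop]
lemma continuous_damping_comp {δ : ℝ} {f : ℝ → ℝ} (hδ : 0 ≤ δ) (hf : Continuous f) :
    Continuous fun v => damping δ (f v) := by
  unfold damping
  exact Continuous.inv₀ (by fun_prop) fun v => by positivity

lemma continuous_dampedCurvature (k : ℝ) {δ : ℝ} (hδ : 0 ≤ δ) :
    Continuous (dampedCurvature k δ) := by
  unfold dampedCurvature
  fun_prop (disch := assumption)

lemma tsupport_comp_add_subset (hUr : tsupport U ⊆ Set.Ioo (-r) r) {ℓ L : ℝ} (hℓ : |ℓ| ≤ L) :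
    tsupport (fun v => U (v + ℓ)) ⊆ Set.Ioo (-(r + L)) (r + L) := by
  intro v hv
  have := hUr (tsupport_comp_subset_preimage U (continuous_add_const ℓ) hv)
  rw [abs_le] at hℓ
  exact ⟨by linarith [this.1], by linarith [this.2]⟩

lemma contDiff_comp_add_const (hU : ContDiff ℝ 2 U) (ℓ : ℝ) :
    ContDiff ℝ 2 fun v => U (v + ℓ) :=
  hU.comp (contDiff_id.add contDiff_const)

theorem oscInt_eq_integral_saddleAmp (hk : 1 < k) (hU : ContDiff ℝ 2 U)
    (hUr : tsupport U ⊆ Set.Ioo (-r) r) {L x Y Y₀ : ℝ} (hrL : 0 ≤ r + L) (hx : 0 < x) (hY : 0 < Y)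
    (hY₀ : 0 ≤ Y₀) (hL : |logSaddle k x Y| ≤ L) :
    oscInt U k Y x = ∫ v in (-(r + L))..(r + L), damping Y₀ (expPhase k 1 k 1 v) *
      saddleAmp U (k * Y₀ / x) (expPhase k 1 k 1 v) (dampedCurvature k Y₀ v) v (logSaddle k x Y) *
      e (Y * exp (k * logSaddle k x Y) * expPhase k 1 k 0 v) := by
  set ℓ := logSaddle k x Y with hℓ
  have hUℓ := contDiff_comp_add_const hU ℓ
  have hsupp := tsupport_comp_add_subset hUr hL
  have hscale : Y₀ / (Y * exp (k * ℓ)) = k * Y₀ / x * exp (-ℓ) := by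
    have hexp : exp (k * ℓ) = exp ((k - 1) * ℓ) * exp ℓ := by rw [← exp_add]; ring_nf
    rw [hexp, hℓ, exp_mul_logSaddle hk hx hY, exp_neg]
    field_simp
  have hscale' : (Y₀ / (2 * π * Complex.I * (Y * exp (k * ℓ) : ℝ)) : ℂ) =
      (k * Y₀ / x : ℝ) * exp (-ℓ) / (2 * π * Complex.I) := by
    rw [mul_comm, ← div_div, ← Complex.ofReal_div, hscale, Complex.ofReal_mul]
  rw [oscInt, ← integral_add_right_eq_self _ ℓ]
  simp_rw [hℓ, expPhase_add_logSaddle hk hx hY, ← hℓ]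
  rw [integral_eq_of_tsupport_subset_Ioo hsupp (fun v => e (Y * exp (k * ℓ) * expPhase k 1 k 0 v)),
    integral_mul_e_eq_integral_damping (by linarith) hY₀ (by positivity)
      (fun v _ => hasDerivAt_of_contDiff_two hUℓ v)
      (deriv_contDiff_one hUℓ).continuous.continuousOn
      (fun v _ => hasDerivAt_expPhase k 1 k 0 v) (fun v _ => hasDerivAt_expPhase k 1 k 1 v)
      (continuous_expPhase k 1 k 2).continuousOn
      (eq_zero_of_notMem_Ioo hsupp (by simp)).1 (eq_zero_of_notMem_Ioo hsupp (by simp)).1]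
  refine integral_congr fun v _ => ?_
  simp only [hscale', deriv_comp_add_const, saddleAmp, dampedCurvature]
  push_cast
  ring

end StationaryPhase

section DualSum

variable {k r : ℝ}

/-- The fourth moment of `∑_{cM ≤ m ≤ M} e((m/M)^k y)` over `0 ≤ y ≤ M²` is `O(M^{4+θ})`. -/
def MomentBound (θ k : ℝ) : Prop :=
  ∀ c > 0, ∃ C > 0, ∀ M : ℝ, 1 ≤ M →
    ∫ y in (0 : ℝ)..M ^ 2, ‖expSum (natIcc (c * M) M) (fun _ => 1) (powFreq k M) y‖ ^ 4
      ≤ C * M ^ (4 + θ)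

/-- The length of the sum over `ν` dual to a sum over `m ≤ M` at heights `Y ≍ Y₀`. -/
noncomputable def dualLength (k r Y₀ M : ℝ) : ℝ := stationaryUpper k r * Y₀ / M

/-- The change of variable which brings the dual phases to the form `(ν/M')^{k'} y`, where
`k' = k/(k-1)` and `M' = dualLength k r Y₀ M`. -/
noncomputable def dualTime (k r Y₀ Y : ℝ) : ℝ :=
  Y * (stationaryUpper k r * Y₀ / (k * Y)) ^ (k / (k - 1))

lemma dualLength_pos (hk : 0 < k) (r : ℝ) {Y₀ M : ℝ} (hY₀ : 0 < Y₀) (hM : 0 < M) :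
    0 < dualLength k r Y₀ M := by
  have := stationaryUpper_pos hk r
  unfold dualLength
  positivity

lemma dualRange_eq_natIcc (hk : 0 < k) (r Y₀ M : ℝ) :
    dualRange k r Y₀ M =
      natIcc (stationaryLower k r / stationaryUpper k r * dualLength k r Y₀ M)
        (dualLength k r Y₀ M) := by
  have := (stationaryUpper_pos hk r).ne'
  rw [dualRange, dualLength]
  congr 1
  field_simp

lemma mul_mem_Icc_of_mem_dualRange (hk : 0 < k) {Y₀ M : ℝ} (hY₀ : 0 < Y₀) (hM : 0 < M) {ν : ℕ}
    (hν : ν ∈ dualRange k r Y₀ M) :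
    ν * M ∈ Set.Icc (stationaryLower k r * Y₀) (stationaryUpper k r * Y₀) := by
  have h := (mem_natIcc (dualLength_pos hk r hY₀ hM).le).1 hν
  exact ⟨(div_le_iff₀ hM).1 h.1, (le_div_iff₀ hM).1 h.2⟩

lemma mul_pos_of_mem_dualRange (hk : 0 < k) {Y₀ M : ℝ} (hY₀ : 0 < Y₀) (hM : 0 < M) {ν : ℕ}
    (hν : ν ∈ dualRange k r Y₀ M) : 0 < ν * M :=
  (mul_pos (stationaryLower_pos hk r) hY₀).trans_le (mul_mem_Icc_of_mem_dualRange hk hY₀ hM hν).1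

lemma card_natIcc_le {a b : ℝ} (ha : 0 < a) (hb : 0 ≤ b) : ((natIcc a b).card : ℝ) ≤ b := by
  have : (natIcc a b).card ≤ ⌊b⌋₊ := by
    have := Nat.ceil_pos.2 ha
    rw [natIcc, Nat.card_Icc]
    omega
  exact (Nat.cast_le.2 this).trans (Nat.floor_le hb)

lemma card_dualRange_le (hk : 0 < k) {Y₀ M : ℝ} (hY₀ : 0 < Y₀) (hM : 0 < M) :
    ((dualRange k r Y₀ M).card : ℝ) ≤ dualLength k r Y₀ M :=
  card_natIcc_le (div_pos (mul_pos (stationaryLower_pos hk r) hY₀) hM)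
    (dualLength_pos hk r hY₀ hM).le

lemma mul_exp_logSaddle_eq_powFreq_mul_dualTime (hk : 1 < k) {Y₀ Y M : ℝ} (hY₀ : 0 < Y₀)
    (hY : 0 < Y) (hM : 0 < M) {ν : ℕ} (hν : 0 < ν * M) :
    Y * exp (k * logSaddle k (ν * M) Y) =
      powFreq (k / (k - 1)) (dualLength k r Y₀ M) ν * dualTime k r Y₀ Y := by
  have hk0 : 0 < k := zero_lt_one.trans hk
  have hk1 : k - 1 ≠ 0 := by linarith
  have hC := stationaryUpper_pos hk0 r
  have hexp : exp (k * logSaddle k (ν * M) Y) = (ν * M / k / Y) ^ (k / (k - 1)) := by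
    rw [← exp_mul_logSaddle hk hν hY, ← exp_mul]
    congr 1
    field_simp
  have hratio : ν * M / k / Y =
      ν / dualLength k r Y₀ M * (stationaryUpper k r * Y₀ / (k * Y)) := by
    unfold dualLength
    field_simp
  rw [hexp, hratio, mul_rpow (div_nonneg ν.cast_nonneg (dualLength_pos hk0 r hY₀ hM).le)
    (by positivity), powFreq, dualTime]
  ring

lemma dualTime_nonneg (hk : 0 < k) (r : ℝ) {Y₀ Y : ℝ} (hY₀ : 0 ≤ Y₀) (hY : 0 ≤ Y) :
    0 ≤ dualTime k r Y₀ Y := by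
  have := stationaryUpper_pos hk r
  unfold dualTime
  positivity

lemma dualTime_self (k r : ℝ) {Y₀ : ℝ} (hY₀ : Y₀ ≠ 0) :
    dualTime k r Y₀ Y₀ = Y₀ * (stationaryUpper k r / k) ^ (k / (k - 1)) := by
  rw [dualTime, mul_div_mul_right _ _ hY₀]

lemma hasDerivAt_dualTime (hk : 1 < k) (r : ℝ) {Y₀ Y : ℝ} (hY₀ : 0 < Y₀) (hY : 0 < Y) :
    HasDerivAt (dualTime k r Y₀)
      (-((stationaryUpper k r * Y₀ / (k * Y)) ^ (k / (k - 1)) / (k - 1))) Y := by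
  have hk0 : 0 < k := zero_lt_one.trans hk
  have hk1 : k - 1 ≠ 0 := by linarith
  have hC := stationaryUpper_pos hk0 r
  have hbase : HasDerivAt (fun Y => stationaryUpper k r * Y₀ / (k * Y))
      (-(stationaryUpper k r * Y₀ / (k * Y)) / Y) Y := by
    refine ((hasDerivAt_const Y _).fun_div ((hasDerivAt_id' Y).const_mul k)
      (by positivity)).congr_deriv ?_
    field_simp
    ring
  have hpos : 0 < stationaryUpper k r * Y₀ / (k * Y) := by positivity
  refine ((hasDerivAt_id' Y).fun_mul (hbase.rpow_const (Or.inl hpos.ne'))).congr_deriv ?_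
  rw [rpow_sub_one hpos.ne']
  field_simp
  ring

lemma one_le_div_of_mem_Icc (hk : 1 < k) (hr : 0 ≤ r) {Y₀ Y : ℝ} (hY₀ : 0 < Y₀)
    (hY : Y ∈ Set.Icc Y₀ (2 * Y₀)) : 1 ≤ stationaryUpper k r * Y₀ / (k * Y) := by
  have hexp : 1 ≤ exp ((k - 1) * r) := one_le_exp (mul_nonneg (by linarith) hr)
  have hYpos := hY₀.trans_le hY.1
  rw [le_div_iff₀ (by positivity), one_mul, stationaryUpper]
  calc k * Y ≤ 4 * k * 1 * Y₀ := by nlinarith [hY.2]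
    _ ≤ _ := by gcongr

lemma integral_comp_dualTime_le (hk : 1 < k) (hr : 0 ≤ r) {F : ℝ → ℝ} (hF : Continuous F)
    (hF0 : ∀ y, 0 ≤ F y) {Y₀ γ : ℝ} (hY₀ : 0 < Y₀) (hγ : γ ≤ -((k - 1) / 2)) :
    ∫ Y in Y₀..2 * Y₀, F (dualTime k r Y₀ Y * γ) ≤ 2 * ∫ y in (dualTime k r Y₀ Y₀ * γ)..0, F y := by
  have hk0 : 0 < k := zero_lt_one.trans hk
  have hk1 : 0 < k - 1 := by linarith
  have hY₀2 : Y₀ ≤ 2 * Y₀ := by linarith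
  set φ' : ℝ → ℝ := fun Y => -((stationaryUpper k r * Y₀ / (k * Y)) ^ (k / (k - 1)) / (k - 1)) * γ
  have hderiv (Y : ℝ) (hY : Y ∈ Set.Icc Y₀ (2 * Y₀)) :
      HasDerivAt (fun Y => dualTime k r Y₀ Y * γ) (φ' Y) Y :=
    (hasDerivAt_dualTime hk r hY₀ (hY₀.trans_le hY.1)).mul_const γ
  have hcont : ContinuousOn φ' (Set.Icc Y₀ (2 * Y₀)) := by
    have hbase : ContinuousOn (fun Y => stationaryUpper k r * Y₀ / (k * Y)) (Set.Icc Y₀ (2 * Y₀)) :=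
      ContinuousOn.div (by fun_prop) (by fun_prop) fun Y hY => by
        have := hY₀.trans_le hY.1
        positivity
    have := hbase.rpow_const (p := k / (k - 1)) fun Y _ => Or.inr (by positivity)
    fun_prop
  have hlower (Y : ℝ) (hY : Y ∈ Set.Icc Y₀ (2 * Y₀)) : 1 / 2 ≤ φ' Y := by
    have hone : 1 ≤ (stationaryUpper k r * Y₀ / (k * Y)) ^ (k / (k - 1)) :=
      one_le_rpow (one_le_div_of_mem_Icc hk hr hY₀ hY) (by positivity)
    calc 1 / 2 = 1 / (k - 1) * ((k - 1) / 2) := by field_simp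
      _ ≤ (stationaryUpper k r * Y₀ / (k * Y)) ^ (k / (k - 1)) / (k - 1) * -γ := by
          gcongr
          linarith
      _ = φ' Y := by simp only [φ']; ring
  have hφ : Y₀ ≤ 2 * (dualTime k r Y₀ (2 * Y₀) * γ - dualTime k r Y₀ Y₀ * γ) := by
    have h := integral_comp_le_of_le_deriv hY₀2 one_half_pos hderiv hcont hlower
      (F := fun _ => 1) continuous_const fun _ => zero_le_one
    norm_num at h
    linarith
  have hend : dualTime k r Y₀ (2 * Y₀) * γ ≤ 0 :=
    mul_nonpos_of_nonneg_of_nonpos (dualTime_nonneg hk0 r hY₀.le (by positivity)) (by linarith)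
  calc _ ≤ (1 / 2)⁻¹ * ∫ y in (dualTime k r Y₀ Y₀ * γ)..(dualTime k r Y₀ (2 * Y₀) * γ), F y :=
        integral_comp_le_of_le_deriv hY₀2 one_half_pos hderiv hcont hlower hF hF0
    _ = 2 * ∫ y in (dualTime k r Y₀ Y₀ * γ)..(dualTime k r Y₀ (2 * Y₀) * γ), F y := by norm_num
    _ ≤ _ := by
        gcongr
        exact integral_mono_interval le_rfl (by linarith) hend (.of_forall hF0)
          (hF.intervalIntegrable _ _)

lemma natIcc_eq_empty {a b : ℝ} (ha : 0 < a) (hb : b < 1) : natIcc a b = ∅ := by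
  have := Nat.ceil_pos.2 ha
  rw [natIcc, Nat.floor_eq_zero.2 hb]
  exact Finset.Icc_eq_empty (by omega)

lemma dualLength_sq_le (hk : 0 < k) (r : ℝ) {Y₀ M : ℝ} (hY₀ : 0 ≤ Y₀) (hM : 0 < M)
    (hYM : Y₀ ≤ M ^ 2) : dualLength k r Y₀ M ^ 2 ≤ stationaryUpper k r ^ 2 * Y₀ := by
  have := stationaryUpper_pos hk r
  calc dualLength k r Y₀ M ^ 2 = stationaryUpper k r ^ 2 * Y₀ * (Y₀ / M ^ 2) := by
        unfold dualLength
        ring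
    _ ≤ stationaryUpper k r ^ 2 * Y₀ :=
        mul_le_of_le_one_right (by positivity) ((div_le_one (by positivity)).2 hYM)

theorem exists_integral_expSum_dual_le {θ G : ℝ} (hk : 1 < k) (hr : 0 ≤ r) (hG : 0 ≤ G)
    (hθ : MomentBound θ (k / (k - 1))) :
    ∃ C > 0, ∀ (Y₀ M γ : ℝ) (b : ℕ → ℂ), 0 < Y₀ → 0 < M → Y₀ ≤ M ^ 2 →
      γ ∈ Set.Icc (-G) (-((k - 1) / 2)) → (∀ ν ∈ dualRange k r Y₀ M, ‖b ν‖ ≤ 1) →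
      ∫ Y in Y₀..2 * Y₀, ‖expSum (dualRange k r Y₀ M) b
        (powFreq (k / (k - 1)) (dualLength k r Y₀ M)) (dualTime k r Y₀ Y * γ)‖ ^ 4
        ≤ C * (Y₀ * dualLength k r Y₀ M ^ (2 + θ)) := by
  have hk0 : 0 < k := zero_lt_one.trans hk
  have hc₁ := stationaryLower_pos hk0 r
  have hc₂ := stationaryUpper_pos hk0 r
  obtain ⟨C, hC, hmoment⟩ := hθ (stationaryLower k r / stationaryUpper k r) (by positivity)
  set Ψ := (stationaryUpper k r / k) ^ (k / (k - 1))
  have hΨ : 0 < Ψ := rpow_pos_of_pos (by positivity) _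
  refine ⟨16 * C * (Ψ * G + stationaryUpper k r ^ 2), by positivity,
    fun Y₀ M γ b hY₀ hM hYM hγ hb => ?_⟩
  have hM' := dualLength_pos hk0 r hY₀ hM
  have hsq := dualLength_sq_le hk0 r hY₀.le hM hYM
  rw [dualRange_eq_natIcc hk0] at hb ⊢
  set M' := dualLength k r Y₀ M
  rcases lt_or_ge M' 1 with hsmall | hlarge
  · rw [natIcc_eq_empty (by positivity) hsmall]
    simpa [expSum] using by positivity
  set A := natIcc (stationaryLower k r / stationaryUpper k r * M') M'
  set f := powFreq (k / (k - 1)) M'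
  have hstart : -(dualTime k r Y₀ Y₀ * γ) ≤ Ψ * G * Y₀ := by
    rw [dualTime_self k r hY₀.ne']
    nlinarith [mul_pos hY₀ hΨ, hγ.1]
  have hend : dualTime k r Y₀ Y₀ * γ ≤ 0 :=
    mul_nonpos_of_nonneg_of_nonpos (dualTime_nonneg hk0 r hY₀.le hY₀.le) (by linarith [hγ.2])
  calc ∫ Y in Y₀..2 * Y₀, ‖expSum A b f (dualTime k r Y₀ Y * γ)‖ ^ 4
      ≤ 2 * ∫ y in (dualTime k r Y₀ Y₀ * γ)..0, ‖expSum A b f y‖ ^ 4 :=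
        integral_comp_dualTime_le hk hr (F := fun y => ‖expSum A b f y‖ ^ 4) (by fun_prop)
          (fun y => by positivity) hY₀ hγ.2
    _ ≤ 2 * (8 * ((0 - dualTime k r Y₀ Y₀ * γ) / M' ^ 2 + 1) * (C * M' ^ (4 + θ))) := by
        gcongr
        refine (integral_norm_expSum_pow_four_le (d := fun _ => 1) (T := M' ^ 2) hb (by positivity)
          hend).trans ?_
        gcongr
        simpa using hmoment M' hlarge
    _ = 16 * C * (-(dualTime k r Y₀ Y₀ * γ) + M' ^ 2) * M' ^ (2 + θ) := by
        rw [show 4 + θ = 2 + (2 + θ) by ring, rpow_add hM', rpow_two]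
        field_simp
        ring
    _ ≤ 16 * C * (Ψ * G * Y₀ + stationaryUpper k r ^ 2 * Y₀) * M' ^ (2 + θ) := by gcongr
    _ = _ := by ring

end DualSum

section SaddleSum

variable {U : ℝ → ℂ} {k r R : ℝ}

/-- The amplitude `saddleAmp` at the stationary point of `Y t^k - x t`, as a function of `Y`. -/
noncomputable def saddleCoeff (U : ℝ → ℂ) (k Y₀ x v Y : ℝ) : ℂ :=
  saddleAmp U (k * Y₀ / x) (expPhase k 1 k 1 v) (dampedCurvature k Y₀ v) v (logSaddle k x Y)

/-- The derivative of `saddleCoeff` in `Y`. -/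
noncomputable def saddleCoeffDeriv (U : ℝ → ℂ) (k Y₀ x v Y : ℝ) : ℂ :=
  (-Y⁻¹ / (k - 1)) • saddleAmpDeriv U (k * Y₀ / x) (expPhase k 1 k 1 v) (dampedCurvature k Y₀ v) v
    (logSaddle k x Y)

/-- An exponential sum over the dual range at time `dualTime k r Y₀ Y * expPhase k 1 k 0 v`, with
the coefficients `saddleCoeff`. -/
noncomputable def saddleSum (U : ℝ → ℂ) (k r Y₀ M v Y : ℝ) : ℂ :=
  ∑ ν ∈ dualRange k r Y₀ M, saddleCoeff U k Y₀ (ν * M) v Y *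
    e (powFreq (k / (k - 1)) (dualLength k r Y₀ M) ν * (dualTime k r Y₀ Y * expPhase k 1 k 0 v))

/-- The integrand of the representation of the sum of the dual oscillatory integrals as an integral
over `v`, where `v = 0` corresponds to the stationary point of each of them. -/
noncomputable def saddleIntegrand (U : ℝ → ℂ) (k r Y₀ M v Y : ℝ) : ℂ :=
  damping Y₀ (expPhase k 1 k 1 v) * saddleSum U k r Y₀ M v Y

lemma hasDerivAt_saddleCoeff (hU : ContDiff ℝ 2 U) (k Y₀ x v : ℝ) {Y : ℝ} (hY : Y ≠ 0) :
    HasDerivAt (saddleCoeff U k Y₀ x v) (saddleCoeffDeriv U k Y₀ x v Y) Y :=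
  (hasDerivAt_saddleAmp hU (k * Y₀ / x) _ _ v _).scomp Y (hasDerivAt_logSaddle k x hY)

lemma continuousOn_logSaddle (k x : ℝ) {Y₀ : ℝ} (hY₀ : 0 < Y₀) :
    ContinuousOn (logSaddle k x) (Set.Icc Y₀ (2 * Y₀)) := fun _ hY =>
  (hasDerivAt_logSaddle k x (hY₀.trans_le hY.1).ne').continuousAt.continuousWithinAt

lemma continuous_saddleAmp_comp {X : Type*} [TopologicalSpace X] (hU : ContDiff ℝ 1 U) (κ : ℝ)
    {b₁ b₂ v ℓ : X → ℝ} (hb₁ : Continuous b₁) (hb₂ : Continuous b₂) (hv : Continuous v)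
    (hℓ : Continuous ℓ) : Continuous fun p => saddleAmp U κ (b₁ p) (b₂ p) (v p) (ℓ p) := by
  have := hU.continuous
  have := hU.continuous_deriv le_rfl
  unfold saddleAmp
  fun_prop

lemma continuousOn_saddleCoeffDeriv (hU : ContDiff ℝ 2 U) (k x v : ℝ) {Y₀ : ℝ} (hY₀ : 0 < Y₀) :
    ContinuousOn (saddleCoeffDeriv U k Y₀ x v) (Set.Icc Y₀ (2 * Y₀)) := by
  have hamp : Continuous (saddleAmpDeriv U (k * Y₀ / x) (expPhase k 1 k 1 v)
      (dampedCurvature k Y₀ v) v) := by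
    have := hU.continuous
    have := (deriv_contDiff_one hU).continuous
    have := continuous_saddleAmp_comp (deriv_contDiff_one hU) (k * Y₀ / x)
      (continuous_const (y := expPhase k 1 k 1 v)) (continuous_const (y := dampedCurvature k Y₀ v))
      (continuous_const (y := v)) continuous_id
    unfold saddleAmpDeriv
    fun_prop
  have hfactor : ContinuousOn (fun Y : ℝ => -Y⁻¹ / (k - 1)) (Set.Icc Y₀ (2 * Y₀)) :=
    (continuousOn_id.inv₀ fun Y hY => (hY₀.trans_le hY.1).ne').neg.div_const _
  exact hfactor.smul (hamp.comp_continuousOn (continuousOn_logSaddle k x hY₀))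

lemma continuousOn_dualTime (hk : 1 < k) (r : ℝ) {Y₀ : ℝ} (hY₀ : 0 < Y₀) :
    ContinuousOn (dualTime k r Y₀) (Set.Icc Y₀ (2 * Y₀)) := fun _ hY =>
  (hasDerivAt_dualTime hk r hY₀ (hY₀.trans_le hY.1)).continuousAt.continuousWithinAt

lemma continuousOn_saddleSum (hk : 1 < k) (hU : ContDiff ℝ 2 U) (r M : ℝ) {Y₀ : ℝ} (hY₀ : 0 < Y₀) :
    ContinuousOn (saddleSum U k r Y₀ M).uncurry (Set.univ ×ˢ Set.Icc Y₀ (2 * Y₀)) := by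
  unfold Function.uncurry saddleSum
  refine continuousOn_finsetSum _ fun ν _ => ContinuousOn.mul ?_ ?_
  · have hpair : ContinuousOn (fun p : ℝ × ℝ => (p.1, logSaddle k (ν * M) p.2))
        (Set.univ ×ˢ Set.Icc Y₀ (2 * Y₀)) :=
      continuousOn_fst.prodMk ((continuousOn_logSaddle k _ hY₀).comp continuousOn_snd
        fun p hp => hp.2)
    have hcurv := continuous_dampedCurvature k hY₀.le
    exact (continuous_saddleAmp_comp (hU.of_le one_le_two) (k * Y₀ / (ν * M))
      (b₁ := fun p : ℝ × ℝ => expPhase k 1 k 1 p.1) (b₂ := fun p => dampedCurvature k Y₀ p.1)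
      (by fun_prop) (by fun_prop) continuous_fst continuous_snd).comp_continuousOn hpair
  · have htime : ContinuousOn (fun p : ℝ × ℝ => dualTime k r Y₀ p.2)
        (Set.univ ×ˢ Set.Icc Y₀ (2 * Y₀)) :=
      (continuousOn_dualTime hk r hY₀).comp continuousOn_snd fun p hp => hp.2
    exact continuous_e.comp_continuousOn (continuousOn_const.mul
      (htime.mul ((continuous_expPhase k 1 k 0).comp continuous_fst).continuousOn))

lemma sum_oscInt_eq_integral_saddleIntegrand (hk : 1 < k) (hR : 0 ≤ R)
    (hrR : r + saddleRadius k r ≤ R) (hU : ContDiff ℝ 2 U)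
    (hUr : tsupport U ⊆ Set.Ioo (-r) r) {Y₀ M Y : ℝ} (hY₀ : 0 < Y₀) (hM : 0 < M)
    (hY : Y ∈ Set.Icc Y₀ (2 * Y₀)) :
    ∑ ν ∈ dualRange k r Y₀ M, oscInt U k Y (ν * M) =
      ∫ v in (-R)..R, saddleIntegrand U k r Y₀ M v Y := by
  have hk0 : 0 < k := zero_lt_one.trans hk
  have hYpos := hY₀.trans_le hY.1
  simp only [saddleIntegrand, saddleSum, Finset.mul_sum]
  rw [intervalIntegral.integral_finsetSum]
  · refine Finset.sum_congr rfl fun ν hν => ?_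
    have hpos := mul_pos_of_mem_dualRange hk0 hY₀ hM hν
    have hℓ : |logSaddle k (ν * M) Y| ≤ R - r :=
      (abs_logSaddle_le hk hY₀ hY (mul_mem_Icc_of_mem_dualRange hk0 hY₀ hM hν)).trans (by linarith)
    rw [oscInt_eq_integral_saddleAmp hk hU hUr (by linarith) hpos hYpos hY₀.le hℓ, add_sub_cancel]
    simp only [mul_exp_logSaddle_eq_powFreq_mul_dualTime (r := r) hk hY₀ hYpos hM hpos]
    simp only [saddleCoeff, mul_assoc]
  · intro ν _
    have hcurv := continuous_dampedCurvature k hY₀.le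
    have hdamp := continuous_damping_comp hY₀.le (continuous_expPhase k 1 k 1)
    have hamp := continuous_saddleAmp_comp (hU.of_le one_le_two) (k * Y₀ / (ν * M))
      (continuous_expPhase k 1 k 1) hcurv continuous_id
      (continuous_const (y := logSaddle k (ν * M) Y))
    exact Continuous.intervalIntegrable (by unfold saddleCoeff; fun_prop) _ _

lemma exists_norm_saddleCoeff_le (hk : 1 < k) (hR : 0 < R) (hU : ContDiff ℝ 2 U)
    (hUr : tsupport U ⊆ Set.Ioo (-r) r) :
    ∃ K > 0, ∀ (Y₀ M v Y : ℝ) (ν : ℕ), 0 < Y₀ → 0 < M → v ∈ Set.Icc (-R) R →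
      Y ∈ Set.Icc Y₀ (2 * Y₀) → ν ∈ dualRange k r Y₀ M →
      ‖saddleCoeff U k Y₀ (ν * M) v Y‖ ≤ K ∧ ‖saddleCoeffDeriv U k Y₀ (ν * M) v Y‖ ≤ K / Y₀ := by
  have hk0 : 0 < k := zero_lt_one.trans hk
  have hk1 : 0 < k - 1 := by linarith
  have hc₁ := stationaryLower_pos hk0 r
  obtain ⟨W, hW0, hW⟩ := exists_norm_derivs_le hU (hasCompactSupport_of_tsupport_subset_Ioo hUr)
  set G := k ^ 3 * exp (k * R) * (1 + |k|)
  set κ₀ := k / stationaryLower k r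
  set B := W + κ₀ * exp (saddleRadius k r) * (4 * W * G)
  refine ⟨B + (k - 1)⁻¹ * B, by positivity, fun Y₀ M v Y ν hY₀ hM hv hY hν => ?_⟩
  have hx := mul_mem_Icc_of_mem_dualRange hk0 hY₀ hM hν
  have hYpos := hY₀.trans_le hY.1
  have hκ : |k * Y₀ / (ν * M)| ≤ κ₀ := by
    have hpos := mul_pos_of_mem_dualRange hk0 hY₀ hM hν
    rw [abs_of_pos (by positivity), div_le_div_iff₀ hpos hc₁]
    nlinarith [hx.1]
  have hb₁ : |expPhase k 1 k 1 v| ≤ G := abs_expPhase_le hk one_pos hR hv (by norm_num)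
  have hb₂ : |dampedCurvature k Y₀ v| ≤ G :=
    (abs_dampedCurvature_le hY₀.le v).trans (abs_expPhase_le hk one_pos hR hv (by norm_num))
  have hℓ := abs_logSaddle_le hk hY₀ hY hx
  have hB : 0 < B := by positivity
  constructor
  · refine (norm_saddleAmp_le hκ hb₁ hb₂ hℓ (hW _).1 (hW _).2.1).trans ?_
    have : W + κ₀ * exp (saddleRadius k r) * (2 * W * G) ≤ B := by
      unfold B
      gcongr
      norm_num
    linarith [mul_pos (inv_pos.2 hk1) hB]
  · have hderiv := norm_saddleAmpDeriv_le hκ hb₁ hb₂ hℓ (hW (v + logSaddle k (ν * M) Y))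
    have hscale : ‖-Y⁻¹ / (k - 1)‖ ≤ (k - 1)⁻¹ / Y₀ := by
      rw [norm_div, norm_neg, norm_of_nonneg (by positivity), norm_of_nonneg hk1.le, div_eq_mul_inv,
        mul_comm, div_eq_mul_inv]
      gcongr
      exact hY.1
    calc ‖saddleCoeffDeriv U k Y₀ (ν * M) v Y‖ ≤ (k - 1)⁻¹ / Y₀ * B := by
          rw [saddleCoeffDeriv, norm_smul]
          gcongr
      _ = (k - 1)⁻¹ * B / Y₀ := by ring
      _ ≤ (B + (k - 1)⁻¹ * B) / Y₀ := by gcongr; linarith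

lemma exists_norm_saddleSum_le (hk : 1 < k) (hR : 0 < R) (hU : ContDiff ℝ 2 U)
    (hUr : tsupport U ⊆ Set.Ioo (-r) r) :
    ∃ K > 0, ∀ Y₀ M v Y : ℝ, 0 < Y₀ → 0 < M → v ∈ Set.Icc (-R) R → Y ∈ Set.Icc Y₀ (2 * Y₀) →
      ‖saddleSum U k r Y₀ M v Y‖ ≤ K * (Y₀ / M) := by
  have hk0 : 0 < k := zero_lt_one.trans hk
  have hc₂ := stationaryUpper_pos hk0 r
  obtain ⟨K, hK, hcoeff⟩ := exists_norm_saddleCoeff_le hk hR hU hUr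
  refine ⟨stationaryUpper k r * K, by positivity, fun Y₀ M v Y hY₀ hM hv hY => ?_⟩
  calc ‖saddleSum U k r Y₀ M v Y‖ ≤ (dualRange k r Y₀ M).card • K :=
        (norm_sum_le_of_le _ fun ν hν => by
          rw [norm_mul, norm_e, mul_one]
          exact (hcoeff Y₀ M v Y ν hY₀ hM hv hY hν).1).trans_eq (Finset.sum_const K)
    _ ≤ dualLength k r Y₀ M * K := by
        rw [nsmul_eq_mul]
        gcongr
        exact card_dualRange_le hk0 hY₀ hM
    _ = stationaryUpper k r * K * (Y₀ / M) := by
        unfold dualLength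
        ring

lemma exists_integral_saddleSum_le {θ : ℝ} (hk : 1 < k) (hr : 0 < r) (hR : 0 < R)
    (hU : ContDiff ℝ 2 U) (hUr : tsupport U ⊆ Set.Ioo (-r) r) (hθ : MomentBound θ (k / (k - 1))) :
    ∃ C > 0, ∀ Y₀ M v : ℝ, 0 < Y₀ → 0 < M → Y₀ ≤ M ^ 2 → v ∈ Set.Icc (-R) R →
      expPhase k 1 k 0 v ≤ -((k - 1) / 2) →
      ∫ Y in Y₀..2 * Y₀, ‖saddleSum U k r Y₀ M v Y‖ ^ 4
        ≤ C * (Y₀ * dualLength k r Y₀ M ^ (2 + θ)) := by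
  obtain ⟨K, hK, hcoeff⟩ := exists_norm_saddleCoeff_le (r := r) hk hR hU hUr
  obtain ⟨C, hC, hdual⟩ := exists_integral_expSum_dual_le hk hr.le
    (G := k ^ 3 * exp (k * R) * (1 + |k|)) (by positivity) hθ
  refine ⟨(2 * K) ^ 4 * C, by positivity, fun Y₀ M v hY₀ hM hYM hv hneg => ?_⟩
  have hγ : expPhase k 1 k 0 v ∈ Set.Icc (-(k ^ 3 * exp (k * R) * (1 + |k|))) (-((k - 1) / 2)) :=
    ⟨(abs_le.1 (abs_expPhase_le hk one_pos hR hv (by norm_num))).1, hneg⟩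
  rw [mul_assoc]
  refine integral_norm_sum_pow_succ_le_of_unit_coeff (n := 3) (by linarith) hK (fun ν _ => ?_)
    (fun ν _ Y hY => hasDerivAt_saddleCoeff hU k Y₀ (ν * M) v (hY₀.trans_le hY.1).ne')
    (fun ν _ => continuousOn_saddleCoeffDeriv hU k _ v hY₀)
    (fun ν hν => (hcoeff Y₀ M v Y₀ ν hY₀ hM hv ⟨le_rfl, by linarith⟩ hν).1)
    (fun ν hν Y hY => ?_) fun b hb => hdual Y₀ M _ b hY₀ hM hYM hγ hb
  · exact continuous_e.comp_continuousOn
      (continuousOn_const.mul ((continuousOn_dualTime hk r hY₀).mul continuousOn_const))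
  · convert (hcoeff Y₀ M v Y ν hY₀ hM hv hY hν).2 using 2
    ring

end SaddleSum

section SaddleMoment

variable {U : ℝ → ℂ} {k r R : ℝ}

lemma abs_mul_exp_neg_abs_le_abs_exp_sub_one (t : ℝ) : |t| * exp (-|t|) ≤ |exp t - 1| := by
  rcases le_total 0 t with ht | ht
  · rw [abs_of_nonneg ht, abs_of_nonneg (by linarith [one_le_exp ht])]
    calc t * exp (-t) ≤ t * 1 := by gcongr; exact exp_le_one_iff.2 (by linarith)
      _ ≤ exp t - 1 := by linarith [add_one_le_exp t]
  · rw [abs_of_nonpos ht, abs_of_nonpos (by linarith [exp_le_one_iff.2 ht]), neg_neg]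
    have hinv : exp t * exp (-t) = 1 := by rw [← exp_add, add_neg_cancel, exp_zero]
    nlinarith [exp_pos t, add_one_le_exp (-t)]

lemma mul_abs_le_abs_expPhase_one (hk : 1 < k) {v : ℝ} (hv : v ∈ Set.Icc (-R) R) :
    k * (k - 1) * exp (-(k * R)) * |v| ≤ |expPhase k 1 k 1 v| := by
  have hk1 : 0 < k - 1 := by linarith
  have hphase : expPhase k 1 k 1 v = k * exp v * (exp ((k - 1) * v) - 1) := by
    rw [expPhase, show k * v = v + (k - 1) * v by ring, exp_add]
    ring
  have habs := abs_le.2 hv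
  rw [hphase, abs_mul, abs_of_pos (by positivity : 0 < k * exp v)]
  calc k * (k - 1) * exp (-(k * R)) * |v|
      = k * exp (-R) * ((k - 1) * |v| * exp (-((k - 1) * R))) := by
        rw [show -(k * R) = -R + -((k - 1) * R) by ring, exp_add]
        ring
    _ ≤ k * exp v * (|(k - 1) * v| * exp (-|(k - 1) * v|)) := by
        rw [abs_mul, abs_of_pos hk1]
        gcongr
        exact hv.1
    _ ≤ k * exp v * |exp ((k - 1) * v) - 1| := by
        gcongr
        exact abs_mul_exp_neg_abs_le_abs_exp_sub_one _

lemma exists_expPhase_zero_le (hk : 1 < k) (hR : 0 < R) :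
    ∃ c ∈ Set.Ioc 0 R, ∀ v ∈ Set.Icc (-c) c, expPhase k 1 k 0 v ≤ -((k - 1) / 2) := by
  have hzero : expPhase k 1 k 0 0 < -((k - 1) / 2) := by
    simp [expPhase]
    linarith
  obtain ⟨c, hc, hnear⟩ := Metric.eventually_nhds_iff_ball.1
    ((continuous_expPhase k 1 k 0).continuousAt.eventually_lt_const hzero)
  refine ⟨min (c / 2) R, ⟨by positivity, min_le_right _ _⟩, fun v hv => (hnear v ?_).le⟩
  rw [Metric.mem_ball, dist_zero_right, norm_eq_abs]
  exact (abs_le.2 hv).trans_lt ((min_le_left _ _).trans_lt (by linarith))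

lemma damping_le_damping {δ s t : ℝ} (hδ : 0 ≤ δ) (hst : |s| ≤ |t|) :
    damping δ t ≤ damping δ s := by
  unfold damping
  have := sq_le_sq.2 hst
  gcongr

lemma damping_le_inv {δ t : ℝ} (hδ : 0 < δ) (ht : t ≠ 0) : damping δ t ≤ (δ * t ^ 2)⁻¹ := by
  unfold damping
  gcongr
  linarith

lemma integral_damping_mul_le {δ κ : ℝ} (hδ : 0 < δ) (hκ : 0 < κ) (a b : ℝ) :
    ∫ v in a..b, damping δ (κ * v) ≤ π / (κ * √δ) := by
  have hscale (v : ℝ) : damping δ (κ * v) = (1 + (κ * √δ * v) ^ 2)⁻¹ := by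
    rw [damping, mul_pow, mul_pow, mul_pow, sq_sqrt hδ.le]
    ring_nf
  have hpos : 0 < κ * √δ := by positivity
  simp only [hscale]
  rw [integral_comp_mul_left (fun v => (1 + v ^ 2)⁻¹) hpos.ne', integral_inv_one_add_sq,
    smul_eq_mul, inv_mul_eq_div]
  gcongr
  linarith [arctan_lt_pi_div_two (κ * √δ * b), neg_pi_div_two_lt_arctan (κ * √δ * a)]

lemma continuousOn_saddleIntegrand (hk : 1 < k) (hU : ContDiff ℝ 2 U) (r M : ℝ) {Y₀ : ℝ}
    (hY₀ : 0 < Y₀) :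
    ContinuousOn (saddleIntegrand U k r Y₀ M).uncurry (Set.univ ×ˢ Set.Icc Y₀ (2 * Y₀)) := by
  have hdamp := continuous_damping_comp hY₀.le (continuous_expPhase k 1 k 1)
  exact (Complex.continuous_ofReal.comp (hdamp.comp continuous_fst)).continuousOn.mul
    (continuousOn_saddleSum hk hU r M hY₀)

lemma continuous_saddleIntegrand (hk : 1 < k) (hU : ContDiff ℝ 2 U) (r M : ℝ) {Y₀ Y : ℝ}
    (hY₀ : 0 < Y₀) (hY : Y ∈ Set.Icc Y₀ (2 * Y₀)) :
    Continuous fun v => saddleIntegrand U k r Y₀ M v Y := by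
  have hslice : Continuous fun v : ℝ => (v, Y) := by fun_prop
  have hmem (v : ℝ) : (v, Y) ∈ Set.univ ×ˢ Set.Icc Y₀ (2 * Y₀) := ⟨Set.mem_univ v, hY⟩
  have h := (continuousOn_saddleIntegrand hk hU r M hY₀).comp_continuous hslice hmem
  exact h

lemma continuousOn_intervalIntegral {G : ℝ → ℝ → ℝ} {c d : ℝ} (hcd : c ≤ d)
    (hG : ContinuousOn G.uncurry (Set.univ ×ˢ Set.Icc c d)) (a b : ℝ) :
    ContinuousOn (fun y => ∫ s in a..b, G s y) (Set.Icc c d) := by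
  have hext : Continuous (fun y s => G s (Set.projIcc c d hcd y)).uncurry :=
    continuousOn_univ.1 <| hG.comp
      (by fun_prop : Continuous fun p : ℝ × ℝ => (p.2, (Set.projIcc c d hcd p.1 : ℝ))).continuousOn
      fun p _ => ⟨Set.mem_univ _, Subtype.coe_prop _⟩
  have hcont := continuous_parametric_intervalIntegral_of_continuous' (μ := volume) hext a b
  refine hcont.continuousOn.congr fun y hy => ?_
  simp only [Set.projIcc_of_mem hcd hy]

lemma exists_integral_near_le {θ c : ℝ} (hk : 1 < k) (hr : 0 < r) (hc : c ∈ Set.Ioc 0 R)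
    (hneg : ∀ v ∈ Set.Icc (-c) c, expPhase k 1 k 0 v ≤ -((k - 1) / 2)) (hU : ContDiff ℝ 2 U)
    (hUr : tsupport U ⊆ Set.Ioo (-r) r) (hθ : MomentBound θ (k / (k - 1))) :
    ∃ C > 0, ∀ Y₀ M : ℝ, 0 < Y₀ → 0 < M → Y₀ ≤ M ^ 2 →
      ∫ Y in Y₀..2 * Y₀, (∫ v in (-c)..c, ‖saddleIntegrand U k r Y₀ M v Y‖) ^ 4 ≤
        C * (dualLength k r Y₀ M ^ (2 + θ) / Y₀) := by
  have hk0 : 0 < k := zero_lt_one.trans hk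
  obtain ⟨C, hC, hsum⟩ := exists_integral_saddleSum_le hk hr (hc.1.trans_le hc.2) hU hUr hθ
  set κ := k * (k - 1) * exp (-(k * R))
  have hκ : 0 < κ := by positivity
  refine ⟨(π / κ) ^ 4 * C, by positivity, fun Y₀ M hY₀ hM hYM => ?_⟩
  have hM' := dualLength_pos hk0 r hY₀ hM
  have hsub {v : ℝ} (hv : v ∈ Set.Icc (-c) c) : v ∈ Set.Icc (-R) R :=
    Set.Icc_subset_Icc (neg_le_neg hc.2) hc.2 hv
  have hmoment (v : ℝ) (hv : v ∈ Set.Icc (-c) c) :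
      ∫ Y in Y₀..2 * Y₀, ‖saddleIntegrand U k r Y₀ M v Y‖ ^ 4 ≤
        damping Y₀ (κ * v) ^ 4 * (C * (Y₀ * dualLength k r Y₀ M ^ (2 + θ))) := by
    simp only [saddleIntegrand, norm_mul, mul_pow, intervalIntegral.integral_const_mul,
      Complex.norm_real]
    rw [norm_of_nonneg (damping_pos hY₀.le _).le]
    have hdamp : damping Y₀ (expPhase k 1 k 1 v) ≤ damping Y₀ (κ * v) :=
      damping_le_damping hY₀.le (by
        rw [abs_mul, abs_of_pos hκ]
        exact mul_abs_le_abs_expPhase_one hk (hsub hv))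
    have := (damping_pos hY₀.le (expPhase k 1 k 1 v)).le
    gcongr
    · exact integral_nonneg (by linarith) fun Y _ => by positivity
    · exact hsum Y₀ M v hY₀ hM hYM (hsub hv) (hneg v hv)
  have hχ : Continuous fun v => damping Y₀ (κ * v) := by fun_prop (disch := exact hY₀.le)
  have hχint : 0 ≤ ∫ v in (-c)..c, damping Y₀ (κ * v) :=
    integral_nonneg (by linarith [hc.1]) fun v _ => (damping_pos hY₀.le _).le
  calc _ ≤ (∫ v in (-c)..c, damping Y₀ (κ * v)) ^ 4 *
        (C * (Y₀ * dualLength k r Y₀ M ^ (2 + θ))) :=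
        integral_pow_succ_le_of_le_integral (n := 3)
          (G := fun v Y => ‖saddleIntegrand U k r Y₀ M v Y‖)
          (by linarith [hc.1]) (by linarith)
          ((continuousOn_saddleIntegrand hk hU r M hY₀).mono
            (Set.prod_mono_left (Set.subset_univ _))).norm
          (fun v _ Y _ => norm_nonneg _) hχ.continuousOn (fun v _ => damping_pos hY₀.le _) hmoment
          (fun Y _ => integral_nonneg (by linarith [hc.1]) fun v _ => norm_nonneg _)
          fun Y _ => le_rfl
    _ ≤ (π / (κ * √Y₀)) ^ 4 * (C * (Y₀ * dualLength k r Y₀ M ^ (2 + θ))) := by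
        gcongr
        exact integral_damping_mul_le hY₀ hκ _ _
    _ = (π / κ) ^ 4 * C * (dualLength k r Y₀ M ^ (2 + θ) / Y₀) := by
        have hsqrt : √Y₀ ^ 4 = Y₀ ^ 2 := by rw [show 4 = 2 * 2 from rfl, pow_mul, sq_sqrt hY₀.le]
        rw [div_pow, div_pow, mul_pow, hsqrt]
        field_simp

lemma exists_norm_saddleIntegrand_le {c : ℝ} (hk : 1 < k) (hc : c ∈ Set.Ioc 0 R)
    (hU : ContDiff ℝ 2 U) (hUr : tsupport U ⊆ Set.Ioo (-r) r) :
    ∃ C > 0, ∀ Y₀ M v Y : ℝ, 0 < Y₀ → 0 < M → v ∈ Set.Icc (-R) R → c ≤ |v| →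
      Y ∈ Set.Icc Y₀ (2 * Y₀) →
      ‖saddleIntegrand U k r Y₀ M v Y‖ ≤ C / M := by
  have hc0 : 0 < c := hc.1
  obtain ⟨K, hK, hsum⟩ := exists_norm_saddleSum_le (r := r) hk (hc0.trans_le hc.2) hU hUr
  set κ := k * (k - 1) * exp (-(k * R))
  have hκ : 0 < κ := by positivity
  refine ⟨((κ * c) ^ 2)⁻¹ * K, by positivity, fun Y₀ M v Y hY₀ hM hv hcv hY => ?_⟩
  have hdamp : damping Y₀ (expPhase k 1 k 1 v) ≤ (Y₀ * (κ * c) ^ 2)⁻¹ := by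
    refine (damping_le_damping hY₀.le ?_).trans (damping_le_inv hY₀ (by positivity))
    rw [abs_of_pos (by positivity : 0 < κ * c)]
    exact (mul_le_mul_of_nonneg_left hcv hκ.le).trans (mul_abs_le_abs_expPhase_one hk hv)
  calc _ ≤ (Y₀ * (κ * c) ^ 2)⁻¹ * (K * (Y₀ / M)) := by
        rw [saddleIntegrand, norm_mul, Complex.norm_real, norm_of_nonneg (damping_pos hY₀.le _).le]
        gcongr
        exact hsum Y₀ M v Y hY₀ hM hv hY
    _ = ((κ * c) ^ 2)⁻¹ * K / M := by field_simp

lemma exists_norm_sum_oscInt_le {c : ℝ} (hk : 1 < k) (hc : c ∈ Set.Ioc 0 R)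
    (hrR : r + saddleRadius k r ≤ R) (hU : ContDiff ℝ 2 U) (hUr : tsupport U ⊆ Set.Ioo (-r) r) :
    ∃ C > 0, ∀ Y₀ M Y : ℝ, 0 < Y₀ → 0 < M → Y ∈ Set.Icc Y₀ (2 * Y₀) →
      ‖∑ ν ∈ dualRange k r Y₀ M, oscInt U k Y (ν * M)‖ ≤
        (∫ v in (-c)..c, ‖saddleIntegrand U k r Y₀ M v Y‖) + C / M := by
  have hR : 0 < R := hc.1.trans_le hc.2
  obtain ⟨C, hC, hfar⟩ := exists_norm_saddleIntegrand_le (r := r) hk hc hU hUr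
  refine ⟨2 * C * R, by positivity, fun Y₀ M Y hY₀ hM hY => ?_⟩
  set f : ℝ → ℂ := fun v => saddleIntegrand U k r Y₀ M v Y
  have hint (a b : ℝ) : IntervalIntegrable f volume a b :=
    (continuous_saddleIntegrand hk hU r M hY₀ hY).intervalIntegrable a b
  have hleft : ‖∫ v in (-R)..(-c), f v‖ ≤ C / M * |-c - -R| :=
    norm_integral_le_of_norm_le_const fun v hv => by
      rw [Set.uIoc_of_le (by linarith [hc.2])] at hv
      exact hfar Y₀ M v Y hY₀ hM ⟨hv.1.le, by linarith [hv.2, hc.1]⟩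
        (le_abs.2 (Or.inr (by linarith [hv.2]))) hY
  have hright : ‖∫ v in c..R, f v‖ ≤ C / M * |R - c| :=
    norm_integral_le_of_norm_le_const fun v hv => by
      rw [Set.uIoc_of_le hc.2] at hv
      exact hfar Y₀ M v Y hY₀ hM ⟨by linarith [hv.1, hc.1], hv.2⟩ (le_abs.2 (Or.inl hv.1.le)) hY
  have hlen : |R - c| ≤ R := abs_le.2 ⟨by linarith [hc.2], by linarith [hc.1]⟩
  rw [sum_oscInt_eq_integral_saddleIntegrand hk hR.le hrR hU hUr hY₀ hM hY,
    ← integral_add_adjacent_intervals (hint (-R) c) (hint c R),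
    ← integral_add_adjacent_intervals (hint (-R) (-c)) (hint (-c) c)]
  calc _ ≤ ‖∫ v in (-R)..(-c), f v‖ + ‖∫ v in (-c)..c, f v‖ + ‖∫ v in c..R, f v‖ := norm_add₃_le
    _ ≤ C / M * R + (∫ v in (-c)..c, ‖f v‖) + C / M * R := by
        gcongr
        · exact hleft.trans (by rw [neg_sub_neg]; gcongr)
        · exact intervalIntegral.norm_integral_le_integral_norm (by linarith [hc.1])
        · exact hright.trans (by gcongr)
    _ = (∫ v in (-c)..c, ‖f v‖) + 2 * C * R / M := by ring

lemma continuous_sum_oscInt (hU : Continuous U) (hUr : tsupport U ⊆ Set.Ioo (-r) r) (k M : ℝ)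
    (N : Finset ℕ) : Continuous fun Y => ∑ ν ∈ N, oscInt U k Y (ν * M) := by
  simp only [oscInt_eq_intervalIntegral hUr]
  refine continuous_finsetSum _ fun ν _ =>
    continuous_parametric_intervalIntegral_of_continuous' ?_ _ _
  unfold Function.uncurry expPhase
  fun_prop

theorem exists_integral_sum_oscInt_le {θ : ℝ} (hk : 1 < k) (hr : 0 < r) (hU : ContDiff ℝ 2 U)
    (hUr : tsupport U ⊆ Set.Ioo (-r) r) (hθ : MomentBound θ (k / (k - 1))) :
    ∃ C > 0, ∀ Y₀ M : ℝ, 0 < Y₀ → 0 < M → Y₀ ≤ M ^ 2 →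
      ∫ Y in Y₀..2 * Y₀, ‖∑ ν ∈ dualRange k r Y₀ M, oscInt U k Y (ν * M)‖ ^ 4 ≤
        C * (dualLength k r Y₀ M ^ (2 + θ) / Y₀ + Y₀ / M ^ 4) := by
  have hR : 0 < r + saddleRadius k r := by
    have := log_pos (by norm_num : (1 : ℝ) < 4)
    have : 0 < k - 1 := by linarith
    unfold saddleRadius
    positivity
  obtain ⟨c, hc, hneg⟩ := exists_expPhase_zero_le hk hR
  obtain ⟨C₁, hC₁, hnear⟩ := exists_integral_near_le hk hr hc hneg hU hUr hθ
  obtain ⟨C₂, hC₂, hsplit⟩ := exists_norm_sum_oscInt_le hk hc le_rfl hU hUr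
  refine ⟨8 * (C₁ + C₂ ^ 4), by positivity, fun Y₀ M hY₀ hM hYM => ?_⟩
  have hM' := dualLength_pos (zero_lt_one.trans hk) r hY₀ hM
  set near : ℝ → ℝ := fun Y =>
    ∫ v in (-c)..c, ‖saddleIntegrand U k r Y₀ M v Y‖
  have hnear_cont : ContinuousOn near (Set.Icc Y₀ (2 * Y₀)) :=
    continuousOn_intervalIntegral (G := fun v Y => ‖saddleIntegrand U k r Y₀ M v Y‖) (by linarith)
      (continuousOn_saddleIntegrand hk hU r M hY₀).norm _ _
  have hosc_cont := continuous_sum_oscInt hU.continuous hUr k M (dualRange k r Y₀ M)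
  calc _ ≤ ∫ Y in Y₀..2 * Y₀, (near Y + C₂ / M) ^ 4 := by
        refine integral_mono_on (by linarith) ((hosc_cont.norm.pow 4).intervalIntegrable _ _)
          (((hnear_cont.add continuousOn_const).pow 4).intervalIntegrable_of_Icc (by linarith))
          fun Y hY => ?_
        gcongr
        exact hsplit Y₀ M Y hY₀ hM hY
    _ ≤ 8 * ((∫ Y in Y₀..2 * Y₀, near Y ^ 4) + ∫ Y in Y₀..2 * Y₀, (C₂ / M) ^ 4) :=
        (integral_add_pow_succ_le (n := 3) (by linarith) hnear_cont continuousOn_const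
          (fun Y _ => integral_nonneg (by linarith [hc.1]) fun v _ => norm_nonneg _)
          (fun Y _ => by positivity)).trans_eq (by norm_num)
    _ ≤ 8 * (C₁ * (dualLength k r Y₀ M ^ (2 + θ) / Y₀) + Y₀ * (C₂ / M) ^ 4) := by
        gcongr
        · exact hnear Y₀ M hY₀ hM hYM
        · rw [intervalIntegral.integral_const, smul_eq_mul, two_mul, add_sub_cancel_right]
    _ ≤ 8 * (C₁ + C₂ ^ 4) * (dualLength k r Y₀ M ^ (2 + θ) / Y₀ + Y₀ / M ^ 4) := by
        have h₁ : 0 ≤ dualLength k r Y₀ M ^ (2 + θ) / Y₀ := by positivity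
        have h₂ : 0 ≤ Y₀ / M ^ 4 := by positivity
        rw [div_pow, show Y₀ * (C₂ ^ 4 / M ^ 4) = C₂ ^ 4 * (Y₀ / M ^ 4) by ring]
        nlinarith [mul_nonneg hC₁.le h₂, mul_nonneg (pow_pos hC₂ 4).le h₁]

end SaddleMoment

section DyadicDecomposition

lemma integral_zero_two_pow_le {f : ℝ → ℝ} {D T : ℝ} (hf : Continuous f)
    (h₁ : ∫ x in (0 : ℝ)..1, f x ≤ D) (h₂ : ∀ Y ∈ Set.Icc 1 T, ∫ x in Y..2 * Y, f x ≤ D) {n : ℕ}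
    (hn : 2 ^ n ≤ T) : ∫ x in (0 : ℝ)..2 ^ (n + 1), f x ≤ (n + 2) * D := by
  have hint (a b : ℝ) : IntervalIntegrable f volume a b := hf.intervalIntegrable a b
  have hadd (n : ℕ) : ∫ x in (0 : ℝ)..2 ^ (n + 1), f x =
      (∫ x in (0 : ℝ)..2 ^ n, f x) + ∫ x in (2 ^ n)..2 * 2 ^ n, f x := by
    rw [pow_succ', integral_add_adjacent_intervals (hint _ _) (hint _ _)]
  have hblock := h₂ (2 ^ n) ⟨one_le_pow₀ one_le_two, hn⟩
  rw [hadd]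
  induction n with
  | zero =>
    norm_num at hblock ⊢
    linarith
  | succ n ih =>
    have hn' : (2 : ℝ) ^ n ≤ T := (pow_le_pow_right₀ one_le_two n.le_succ).trans hn
    have := ih hn' (h₂ (2 ^ n) ⟨one_le_pow₀ one_le_two, hn'⟩)
    rw [hadd n]
    push_cast
    linarith

lemma integral_zero_le_log_mul_of_dyadic {f : ℝ → ℝ} {D T : ℝ} (hf : Continuous f)
    (hf0 : ∀ x, 0 ≤ f x) (hT : 1 ≤ T) (h₁ : ∫ x in (0 : ℝ)..1, f x ≤ D)
    (h₂ : ∀ Y ∈ Set.Icc 1 T, ∫ x in Y..2 * Y, f x ≤ D) :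
    ∫ x in (0 : ℝ)..T, f x ≤ 2 * (1 + log T) * D := by
  have hD : 0 ≤ D := (integral_nonneg zero_le_one fun x _ => hf0 x).trans h₁
  obtain ⟨n, hnT, hTn⟩ := exists_nat_pow_near hT one_lt_two
  have hn : (n : ℝ) ≤ 2 * log T := by
    have h := log_le_log (by positivity) hnT
    rw [log_pow] at h
    nlinarith [log_two_gt_d9, n.cast_nonneg (α := ℝ)]
  calc ∫ x in (0 : ℝ)..T, f x ≤ ∫ x in (0 : ℝ)..2 ^ (n + 1), f x :=
        integral_mono_interval le_rfl (by linarith) hTn.le (.of_forall hf0)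
          (hf.intervalIntegrable _ _)
    _ ≤ (n + 2) * D := integral_zero_two_pow_le hf h₁ h₂ hnT
    _ ≤ 2 * (1 + log T) * D := by gcongr; linarith

end DyadicDecomposition

section SmoothMoment

variable {w : ℝ → ℝ} {k r : ℝ}

@[fun_prop]
lemma continuous_smoothSum (w : ℝ → ℝ) (k r M : ℝ) : Continuous (smoothSum w k r M) :=
  continuous_expSum _ _ _

lemma norm_smoothSum_le {W M : ℝ} (hW : ∀ t, |w t| ≤ W) (hM : 1 ≤ M) (k r Y : ℝ) :
    ‖smoothSum w k r M Y‖ ≤ (exp r + 1) * W * M := by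
  have hW0 : 0 ≤ W := (abs_nonneg _).trans (hW 0)
  calc ‖smoothSum w k r M Y‖ ≤ ∑ m ∈ Finset.range ⌈exp r * M⌉₊, ‖(w (m / M) : ℂ)‖ :=
        norm_expSum_le _ _ _ _
    _ ≤ ∑ _m ∈ Finset.range ⌈exp r * M⌉₊, W := by
        gcongr with m
        rw [Complex.norm_real]
        exact hW _
    _ = ⌈exp r * M⌉₊ * W := by rw [Finset.sum_const, Finset.card_range, nsmul_eq_mul]
    _ ≤ (exp r * M + M) * W := by
        gcongr
        exact (Nat.ceil_lt_add_one (by positivity)).le.trans (by linarith)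
    _ = (exp r + 1) * W * M := by ring

lemma exists_norm_smoothSum_le_of_le_sq (hk : 1 < k) (hr : 0 < r) (hw : ContDiff ℝ 2 w)
    (hwr : tsupport w ⊆ Set.Ioo (exp (-r)) (exp r)) :
    ∃ C > 0, ∀ Y₀ Y M : ℝ, 1 ≤ Y₀ → Y ∈ Set.Icc Y₀ (2 * Y₀) → 0 < M → Y₀ ≤ M ^ 2 →
      ‖smoothSum w k r M Y‖ ≤
        M * ‖∑ ν ∈ dualRange k r Y₀ M, oscInt (logWeight w) k Y (ν * M)‖ + C * M / Y₀ := by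
  obtain ⟨C, hC, happrox⟩ := exists_norm_smoothSum_sub_sum_oscInt_le hk hr hw hwr
  refine ⟨2 * C, by positivity, fun Y₀ Y M hY₁ hY hM hYM => ?_⟩
  have hY₀ : 0 < Y₀ := by linarith
  set main : ℂ := M * ∑ ν ∈ dualRange k r Y₀ M, oscInt (logWeight w) k Y (ν * M)
  have herr : M / Y₀ ^ 2 + 1 / M ≤ 2 * (M / Y₀) := by
    have h₁ : M / Y₀ ^ 2 ≤ M / Y₀ := by gcongr; nlinarith
    have h₂ : 1 / M ≤ M / Y₀ := by rw [div_le_div_iff₀ hM hY₀]; nlinarith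
    linarith
  calc ‖smoothSum w k r M Y‖ ≤ ‖main‖ + ‖smoothSum w k r M Y - main‖ :=
        norm_le_norm_add_norm_sub' _ _
    _ ≤ ‖main‖ + C * (2 * (M / Y₀)) := by
        gcongr
        exact (happrox Y₀ Y M hY₀ hY hM).trans (by gcongr)
    _ = _ := by
        rw [norm_mul, Complex.norm_real, norm_of_nonneg hM.le]
        ring

lemma pow_four_mul_dualLength_rpow_div (hk : 0 < k) (r θ : ℝ) {Y₀ M : ℝ} (hY₀ : 0 < Y₀)
    (hM : 0 < M) :
    M ^ 4 * (dualLength k r Y₀ M ^ (2 + θ) / Y₀) =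
      stationaryUpper k r ^ (2 + θ) * (M ^ 2 * Y₀ * (Y₀ / M) ^ θ) := by
  have := stationaryUpper_pos hk r
  rw [dualLength, mul_div_assoc, mul_rpow this.le (by positivity),
    rpow_add (div_pos hY₀ hM), rpow_two]
  field_simp

lemma exists_pow_four_mul_integral_sum_oscInt_le {U : ℝ → ℂ} {θ : ℝ} (hk : 1 < k) (hr : 0 < r)
    (hU : ContDiff ℝ 2 U) (hUr : tsupport U ⊆ Set.Ioo (-r) r) (hθ : MomentBound θ (k / (k - 1))) :
    ∃ C > 0, ∀ Y₀ M : ℝ, 0 < Y₀ → 1 ≤ M → Y₀ ≤ M ^ 2 →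
      M ^ 4 * ∫ Y in Y₀..2 * Y₀, ‖∑ ν ∈ dualRange k r Y₀ M, oscInt U k Y (ν * M)‖ ^ 4 ≤
        C * (M ^ 4 + M ^ 2 * Y₀ * (Y₀ / M) ^ θ) := by
  have hk0 : 0 < k := zero_lt_one.trans hk
  obtain ⟨C, hC, hosc⟩ := exists_integral_sum_oscInt_le hk hr hU hUr hθ
  set S := stationaryUpper k r ^ (2 + θ)
  have hS : 0 < S := rpow_pos_of_pos (stationaryUpper_pos hk0 r) _
  refine ⟨C * (S + 1), by positivity, fun Y₀ M hY₀ hM₁ hYM => ?_⟩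
  have hM : 0 < M := by linarith
  set Q := M ^ 2 * Y₀ * (Y₀ / M) ^ θ
  calc _ ≤ M ^ 4 * (C * (dualLength k r Y₀ M ^ (2 + θ) / Y₀ + Y₀ / M ^ 4)) := by
        gcongr
        exact hosc Y₀ M hY₀ hM hYM
    _ = C * (M ^ 4 * (dualLength k r Y₀ M ^ (2 + θ) / Y₀) + Y₀) := by field_simp
    _ ≤ C * (S * Q + M ^ 4) := by
        rw [pow_four_mul_dualLength_rpow_div hk0 r θ hY₀ hM]
        gcongr
        exact hYM.trans (pow_le_pow_right₀ hM₁ (by norm_num))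
    _ ≤ C * (S + 1) * (M ^ 4 + Q) := by
        have : 0 ≤ C * Q + C * S * M ^ 4 := by positivity
        linarith

theorem exists_integral_smoothSum_dyadic_le {θ : ℝ} (hk : 1 < k) (hr : 0 < r)
    (hw : ContDiff ℝ 2 w) (hwr : tsupport w ⊆ Set.Ioo (exp (-r)) (exp r))
    (hθ : MomentBound θ (k / (k - 1))) :
    ∃ C > 0, ∀ Y₀ M : ℝ, 1 ≤ Y₀ → 1 ≤ M → Y₀ ≤ M ^ 2 →
      ∫ Y in Y₀..2 * Y₀, ‖smoothSum w k r M Y‖ ^ 4 ≤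
        C * (M ^ 4 + M ^ 2 * Y₀ * (Y₀ / M) ^ θ) := by
  have hU := contDiff_logWeight hw
  have hUr := tsupport_logWeight_subset hwr
  obtain ⟨C₁, hC₁, hsplit⟩ := exists_norm_smoothSum_le_of_le_sq hk hr hw hwr
  obtain ⟨C₂, hC₂, hmain⟩ := exists_pow_four_mul_integral_sum_oscInt_le hk hr hU hUr hθ
  refine ⟨8 * (C₂ + C₁ ^ 4), by positivity, fun Y₀ M hY₁ hM₁ hYM => ?_⟩
  have hY₀ : 0 < Y₀ := by linarith
  have hM : 0 < M := by linarith
  set osc : ℝ → ℝ := fun Y => ‖∑ ν ∈ dualRange k r Y₀ M, oscInt (logWeight w) k Y (ν * M)‖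
  have hosc_cont : Continuous osc := (continuous_sum_oscInt hU.continuous hUr k M _).norm
  set Q := M ^ 2 * Y₀ * (Y₀ / M) ^ θ
  have herr : Y₀ * (C₁ * M / Y₀) ^ 4 ≤ C₁ ^ 4 * M ^ 4 := by
    rw [div_pow, mul_pow, mul_div_assoc', div_le_iff₀ (by positivity), mul_comm]
    gcongr
    exact le_self_pow₀ hY₁ (by norm_num)
  calc _ ≤ ∫ Y in Y₀..2 * Y₀, (M * osc Y + C₁ * M / Y₀) ^ 4 :=
        integral_mono_on (by linarith) (Continuous.intervalIntegrable (by fun_prop) _ _)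
          (Continuous.intervalIntegrable (by fun_prop) _ _) fun Y hY => by
          gcongr
          exact hsplit Y₀ Y M hY₁ hY hM hYM
    _ ≤ 8 * ((∫ Y in Y₀..2 * Y₀, (M * osc Y) ^ 4) + ∫ Y in Y₀..2 * Y₀, (C₁ * M / Y₀) ^ 4) :=
        (integral_add_pow_succ_le (n := 3) (by linarith) (by fun_prop) (by fun_prop)
          (fun Y _ => by positivity) (fun Y _ => by positivity)).trans_eq (by norm_num)
    _ = 8 * (M ^ 4 * (∫ Y in Y₀..2 * Y₀, osc Y ^ 4) + Y₀ * (C₁ * M / Y₀) ^ 4) := by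
        simp only [mul_pow M, intervalIntegral.integral_const_mul]
        rw [intervalIntegral.integral_const, smul_eq_mul, two_mul, add_sub_cancel_right]
    _ ≤ 8 * (C₂ * (M ^ 4 + Q) + C₁ ^ 4 * M ^ 4) :=
        mul_le_mul_of_nonneg_left (add_le_add (hmain Y₀ M hY₀ hM₁ hYM) herr) (by norm_num)
    _ ≤ 8 * (C₂ + C₁ ^ 4) * (M ^ 4 + Q) := by
        have : 0 ≤ C₁ ^ 4 * Q := by positivity
        linarith

lemma integral_zero_one_smoothSum_le {W M : ℝ} (hW : ∀ t, |w t| ≤ W) (hM : 1 ≤ M) (k r : ℝ) :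
    ∫ y in (0 : ℝ)..1, ‖smoothSum w k r M y‖ ^ 4 ≤ ((exp r + 1) * W) ^ 4 * M ^ 4 := by
  calc _ ≤ ∫ _y in (0 : ℝ)..1, ((exp r + 1) * W * M) ^ 4 :=
        integral_mono_on zero_le_one (Continuous.intervalIntegrable (by fun_prop) _ _)
          intervalIntegrable_const fun y _ => by gcongr; exact norm_smoothSum_le hW hM k r y
    _ = ((exp r + 1) * W) ^ 4 * M ^ 4 := by simp [mul_pow]

lemma rpow_mul_rpow_div_rpow_eq_sq {M θ : ℝ} (hM : 0 < M) (hθ : 1 + θ ≠ 0) :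
    M ^ (2 - θ / (1 + θ)) * (M ^ (2 - θ / (1 + θ)) / M) ^ θ = M ^ 2 := by
  rw [← rpow_sub_one hM.ne', ← rpow_mul hM.le, ← rpow_add hM, ← rpow_two]
  congr 1
  field_simp
  ring

theorem exists_integral_smoothSum_le {θ W : ℝ} (hk : 1 < k) (hr : 0 < r) (hw : ContDiff ℝ 2 w)
    (hwr : tsupport w ⊆ Set.Ioo (exp (-r)) (exp r)) (hW : ∀ t, |w t| ≤ W) (hθ0 : 0 ≤ θ)
    (hθ : MomentBound θ (k / (k - 1))) :
    ∃ C > 0, ∀ M : ℝ, 1 ≤ M →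
      ∫ y in (0 : ℝ)..M ^ (2 - θ / (1 + θ)), ‖smoothSum w k r M y‖ ^ 4 ≤
        C * (1 + log M) * M ^ 4 := by
  obtain ⟨C, hC, hdyadic⟩ := exists_integral_smoothSum_dyadic_le hk hr hw hwr hθ
  have hη0 : 0 ≤ θ / (1 + θ) := by positivity
  have hη1 : θ / (1 + θ) ≤ 1 := div_le_one_of_le₀ (by linarith) (by linarith)
  set K := 2 * C + ((exp r + 1) * W) ^ 4
  refine ⟨4 * K, by positivity, fun M hM₁ => ?_⟩
  have hM : 0 < M := by linarith
  set T := M ^ (2 - θ / (1 + θ))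
  have hT₁ : 1 ≤ T := one_le_rpow hM₁ (by linarith)
  have hTM : T ≤ M ^ 2 := by
    rw [← rpow_two]
    exact rpow_le_rpow_of_exponent_le hM₁ (by linarith)
  have hcritical : T * (T / M) ^ θ = M ^ 2 := rpow_mul_rpow_div_rpow_eq_sq hM (by linarith)
  have hblock (Y : ℝ) (hY : Y ∈ Set.Icc 1 T) :
      ∫ y in Y..2 * Y, ‖smoothSum w k r M y‖ ^ 4 ≤ K * M ^ 4 := by
    have hY0 : 0 ≤ Y := by linarith [hY.1]
    calc _ ≤ C * (M ^ 4 + M ^ 2 * (Y * (Y / M) ^ θ)) :=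
          (hdyadic Y M hY.1 hM₁ (hY.2.trans hTM)).trans_eq (by ring)
      _ ≤ C * (M ^ 4 + M ^ 2 * (T * (T / M) ^ θ)) := by gcongr <;> exact hY.2
      _ = 2 * C * M ^ 4 := by rw [hcritical]; ring
      _ ≤ K * M ^ 4 := by gcongr; exact le_add_of_nonneg_right (by positivity)
  have hinitial : ∫ y in (0 : ℝ)..1, ‖smoothSum w k r M y‖ ^ 4 ≤ K * M ^ 4 :=
    (integral_zero_one_smoothSum_le hW hM₁ k r).trans <| by
      gcongr
      exact le_add_of_nonneg_left (by positivity)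
  have hlogT : log T ≤ 2 * log M := by
    rw [log_rpow hM]
    gcongr
    · exact log_nonneg hM₁
    · linarith
  calc _ ≤ 2 * (1 + log T) * (K * M ^ 4) :=
        integral_zero_le_log_mul_of_dyadic (by fun_prop) (fun y => by positivity) hT₁
          hinitial hblock
    _ ≤ 2 * (1 + (1 + 2 * log M)) * (K * M ^ 4) := by gcongr; linarith
    _ = _ := by ring

end SmoothMoment

section MomentBoundIteration

variable {θ θ' k : ℝ}

lemma exists_contDiff_weight {c : ℝ} (hc0 : 0 < c) (hc1 : c < 1) :
    ∃ (w : ℝ → ℝ) (r : ℝ), 0 < r ∧ ContDiff ℝ 2 w ∧ tsupport w ⊆ Set.Ioo (exp (-r)) (exp r) ∧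
      (∀ t ∈ Set.Icc c 1, w t = 1) ∧ ∀ t, w t ∈ Set.Icc 0 1 := by
  let w : ContDiffBump ((c + 1) / 2 : ℝ) :=
    ⟨(1 - c) / 2, 1 / 2 - c / 4, by linarith, by linarith⟩
  have h2c : 2 < 2 / c := (lt_div_iff₀ hc0).2 (by linarith)
  refine ⟨w, log (2 / c), log_pos (by linarith), w.contDiff, fun t ht => ?_, fun t ht => ?_,
    fun t => ⟨w.nonneg, w.le_one⟩⟩
  · rw [w.tsupport_eq, Metric.mem_closedBall, Real.dist_eq, abs_le] at ht
    have hrOut : w.rOut = 1 / 2 - c / 4 := rfl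
    rw [exp_neg, exp_log (by positivity), inv_div]
    constructor <;> linarith [ht.1, ht.2]
  · refine w.one_of_mem_closedBall ?_
    have hrIn : w.rIn = (1 - c) / 2 := rfl
    rw [Metric.mem_closedBall, Real.dist_eq, abs_le]
    constructor <;> linarith [ht.1, ht.2]

lemma integral_expSum_natIcc_le_integral_smoothSum {w : ℝ → ℝ} {c c' r M T y : ℝ} (hr : 0 < r)
    (hcc' : c ≤ c') (hw₁ : ∀ t ∈ Set.Icc c 1, w t = 1) (hw₀ : ∀ t, 0 ≤ w t) (hM : 0 < M)
    (hT : 0 < T) (hy : 0 ≤ y) (k : ℝ) :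
    ∫ y in (0 : ℝ)..y, ‖expSum (natIcc (c' * M) M) (fun _ => 1) (powFreq k M) y‖ ^ 4 ≤
      8 * (y / T + 1) * ∫ y in (0 : ℝ)..T, ‖smoothSum w k r M y‖ ^ 4 := by
  have hsub : natIcc (c' * M) M ⊆ Finset.range ⌈exp r * M⌉₊ := fun m hm => by
    have hmM : (m : ℝ) ≤ M := ((mem_natIcc hM.le).1 hm).2
    rw [Finset.mem_range, Nat.lt_ceil]
    exact hmM.trans_lt (lt_mul_of_one_lt_left hM (one_lt_exp_iff.2 hr))
  have h := integral_norm_expSum_pow_four_le_of_subset (c := fun _ => 1)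
    (d := fun m : ℕ => w (m / M)) (l := powFreq k M) hsub (fun m hm => ?_) (fun m _ => hw₀ _) hT hy
  · rwa [sub_zero] at h
  · obtain ⟨hcm, hmM⟩ := (mem_natIcc hM.le).1 hm
    have : w (m / M) = 1 := hw₁ _
      ⟨hcc'.trans ((le_div_iff₀ hM).2 hcm), (div_le_one hM).2 hmM⟩
    simp [this]

lemma one_add_log_le {M ρ : ℝ} (hM : 1 ≤ M) (hρ : 0 < ρ) : 1 + log M ≤ (1 + 1 / ρ) * M ^ ρ := by
  have hlog := log_le_rpow_div (by linarith : 0 ≤ M) hρ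
  have hone : 1 ≤ M ^ ρ := one_le_rpow hM hρ.le
  calc 1 + log M ≤ M ^ ρ + M ^ ρ / ρ := add_le_add hone hlog
    _ = (1 + 1 / ρ) * M ^ ρ := by ring

theorem MomentBound.of_conjExponent (hk : 1 < k) (hθ0 : 0 ≤ θ) (hθ' : θ / (1 + θ) < θ')
    (hθ : MomentBound θ (k / (k - 1))) : MomentBound θ' k := by
  intro c hc
  obtain ⟨w, r, hr, hw, hwr, hw₁, hw₀⟩ :=
    exists_contDiff_weight (c := min c (1 / 2)) (by positivity)
      (by linarith [min_le_right c (1 / 2)])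
  have hW (t : ℝ) : |w t| ≤ 1 := abs_le.2 ⟨by linarith [(hw₀ t).1], (hw₀ t).2⟩
  obtain ⟨C, hC, hsmooth⟩ := exists_integral_smoothSum_le hk hr hw hwr hW hθ0 hθ
  set η := θ / (1 + θ)
  have hη : 0 ≤ η := by positivity
  have hρ : 0 < θ' - η := sub_pos.2 hθ'
  refine ⟨16 * C * (1 + 1 / (θ' - η)), by positivity, fun M hM₁ => ?_⟩
  have hM : 0 < M := by linarith
  have hcover : M ^ 2 / M ^ (2 - η) + 1 ≤ 2 * M ^ η := by
    have hratio : M ^ 2 / M ^ (2 - η) = M ^ η := by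
      rw [← rpow_two, ← rpow_sub hM, sub_sub_cancel]
    linarith [one_le_rpow hM₁ hη]
  calc _ ≤ 8 * (M ^ 2 / M ^ (2 - η) + 1) *
          ∫ y in (0 : ℝ)..M ^ (2 - η), ‖smoothSum w k r M y‖ ^ 4 :=
        integral_expSum_natIcc_le_integral_smoothSum hr (min_le_left _ _) hw₁ (fun t => (hw₀ t).1)
          hM (by positivity) (by positivity) k
    _ ≤ 8 * (2 * M ^ η) * (C * ((1 + 1 / (θ' - η)) * M ^ (θ' - η)) * M ^ 4) := by
        gcongr
        · exact integral_nonneg (by positivity) fun y _ => by positivity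
        · refine (hsmooth M hM₁).trans ?_
          gcongr
          exact one_add_log_le hM₁ hρ
    _ = 16 * C * (1 + 1 / (θ' - η)) * (M ^ 4 * (M ^ η * M ^ (θ' - η))) := by ring
    _ = _ := by
        rw [← rpow_add hM, add_sub_cancel, rpow_add hM 4]
        norm_cast

lemma MomentBound.mono (hθθ' : θ ≤ θ') (hθ : MomentBound θ k) : MomentBound θ' k := by
  intro c hc
  obtain ⟨C, hC, h⟩ := hθ c hc
  refine ⟨C, hC, fun M hM => (h M hM).trans ?_⟩
  gcongr

lemma momentBound_two (k : ℝ) : MomentBound 2 k := by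
  refine fun c hc => ⟨1, one_pos, fun M hM₁ => ?_⟩
  have hM : 0 < M := by linarith
  calc _ ≤ ∫ _y in (0 : ℝ)..M ^ 2, M ^ 4 := by
        refine integral_mono_on (by positivity) (Continuous.intervalIntegrable (by fun_prop) _ _)
          intervalIntegrable_const fun y _ => ?_
        gcongr
        refine (norm_expSum_le _ _ _ y).trans ?_
        simpa using card_natIcc_le (mul_pos hc hM) hM.le
    _ = M ^ 6 := by rw [intervalIntegral.integral_const, smul_eq_mul]; ring
    _ = 1 * M ^ (4 + 2 : ℝ) := by norm_num

lemma momentBound_two_div_succ (hk : 1 < k) (j : ℕ) : MomentBound (2 / (j + 1)) k := by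
  induction j generalizing k with
  | zero => simpa using momentBound_two k
  | succ j ih =>
    have hk1 : 0 < k - 1 := by linarith
    refine MomentBound.of_conjExponent (θ := 2 / (j + 1)) hk (by positivity) ?_
      (ih ((one_lt_div hk1).2 (by linarith)))
    rw [div_lt_div_iff₀ (by positivity) (by positivity)]
    push_cast
    field_simp
    nlinarith

theorem momentBound_of_pos (hk : 1 < k) (hθ : 0 < θ) : MomentBound θ k := by
  obtain ⟨j, hj⟩ := exists_nat_gt (2 / θ)
  refine (momentBound_two_div_succ hk j).mono ((div_le_iff₀ (by positivity)).2 ?_)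
  rw [div_lt_iff₀ hθ] at hj
  linarith

end MomentBoundIteration

section PrimeSum

variable {k δ : ℝ}

lemma primes_subset_natIcc {M : ℝ} (hk : 0 < k) (hδ : 0 ≤ δ) (hM : 0 ≤ M) :
    (Finset.Icc 1 ⌊M ^ k⌋₊).filter
      (fun p : ℕ => p.Prime ∧ δ * M ^ k ≤ (p : ℝ) ^ k ∧ (p : ℝ) ^ k ≤ M ^ k) ⊆
      natIcc (δ ^ (1 / k) * M) M := by
  intro p hp
  obtain ⟨-, -, hlower, hupper⟩ := Finset.mem_filter.1 hp
  refine (mem_natIcc hM).2 ⟨?_, (rpow_le_rpow_iff p.cast_nonneg hM hk).1 hupper⟩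
  rwa [← rpow_le_rpow_iff (by positivity) p.cast_nonneg hk, mul_rpow (by positivity) hM,
    ← rpow_mul hδ, one_div_mul_cancel hk.ne', rpow_one]

lemma expSum_const_rpow_eq (A : Finset ℕ) (z : ℂ) {M : ℝ} (hM : 0 < M) (k y : ℝ) :
    expSum A (fun _ => z) (fun m => (m : ℝ) ^ k) y =
      z * expSum A (fun _ => 1) (powFreq k M) (M ^ k * y) := by
  simp only [expSum, Finset.mul_sum, one_mul]
  refine Finset.sum_congr rfl fun m _ => ?_
  rw [powFreq, div_rpow m.cast_nonneg hM.le, ← mul_assoc,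
    div_mul_cancel₀ _ (rpow_pos_of_pos hM k).ne']

lemma integral_expSum_const_rpow_eq (A : Finset ℕ) (z : ℂ) {M : ℝ} (hM : 0 < M) (k T : ℝ) :
    ∫ y in (0 : ℝ)..T / M ^ k, ‖expSum A (fun _ => z) (fun m => (m : ℝ) ^ k) y‖ ^ 4 =
      ‖z‖ ^ 4 / M ^ k * ∫ y in (0 : ℝ)..T, ‖expSum A (fun _ => 1) (powFreq k M) y‖ ^ 4 := by
  have hMk := (rpow_pos_of_pos hM k).ne'
  simp only [expSum_const_rpow_eq A z hM, norm_mul, mul_pow, intervalIntegral.integral_const_mul]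
  rw [integral_comp_mul_left (fun y => ‖expSum A (fun _ => 1) (powFreq k M) y‖ ^ 4) hMk,
    mul_zero, mul_div_cancel₀ _ hMk, smul_eq_mul]
  ring

theorem integral_norm_Sk_pow_four_le {M : ℝ} (hk : 0 < k) (hδ : 0 ≤ δ) (hM : 1 ≤ M) (a : ℝ) :
    ∫ α in a..a + 1, ‖Sk δ (M ^ k) k α‖ ^ 4 ≤
      8 * (M ^ k / M ^ 2 + 1) * (log (M ^ k) ^ 4 / M ^ k *
        ∫ y in (0 : ℝ)..M ^ 2,
          ‖expSum (natIcc (δ ^ (1 / k) * M) M) (fun _ => 1) (powFreq k M) y‖ ^ 4) := by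
  have hM0 : 0 < M := by linarith
  have hlog : 0 ≤ log (M ^ k) := log_nonneg (one_le_rpow hM hk.le)
  have h := integral_norm_expSum_pow_four_le_of_subset (c := fun p : ℕ => (log p : ℂ))
    (d := fun _ => log (M ^ k)) (l := fun m : ℕ => (m : ℝ) ^ k) (T := M ^ 2 / M ^ k)
    (primes_subset_natIcc hk hδ hM0.le) (fun p hp => ?_) (fun _ _ => hlog) (by positivity)
    (by linarith : a ≤ a + 1)
  · rwa [add_sub_cancel_left, one_div_div, integral_expSum_const_rpow_eq _ _ hM0,
      Complex.norm_real, norm_of_nonneg hlog] at h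
  · obtain ⟨hp₁, hpM⟩ := Finset.mem_Icc.1 (Finset.mem_filter.1 hp).1
    have hp₁' : (1 : ℝ) ≤ p := by exact_mod_cast hp₁
    rw [Complex.norm_real, norm_of_nonneg (log_nonneg hp₁')]
    exact log_le_log (by linarith) ((Nat.le_floor_iff (by positivity)).1 hpM)

lemma log_pow_four_le {X ε : ℝ} (hX : 1 ≤ X) (hε : 0 < ε) :
    log X ^ 4 ≤ (8 / ε) ^ 4 * X ^ (ε / 2) := by
  have hX0 : 0 ≤ X := by linarith
  have hlog : 0 ≤ log X := log_nonneg hX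
  calc log X ^ 4 ≤ (X ^ (ε / 8) / (ε / 8)) ^ 4 := by
        gcongr
        exact log_le_rpow_div hX0 (by positivity)
    _ = (8 / ε) ^ 4 * (X ^ (ε / 8)) ^ 4 := by field_simp
    _ = _ := by
        rw [← rpow_mul_natCast hX0]
        ring_nf

theorem Sk_fourth_moment_unit_general (k δ ε : ℝ) (hk : 1 < k) (hδ : 0 < δ) (hε : 0 < ε) :
    ∃ C > 0, ∀ X ≥ (1 : ℝ), ∀ a : ℝ,
      ∫ α in a..a + 1, ‖Sk δ X k α‖ ^ 4 ≤ C * (X ^ (2 / k) + X ^ (4 / k - 1)) * X ^ ε := by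
  have hk0 : 0 < k := by linarith
  obtain ⟨C, hC, hmoment⟩ :=
    momentBound_of_pos hk (by positivity : 0 < k * (ε / 2)) (δ ^ (1 / k)) (by positivity)
  refine ⟨8 * C * (8 / ε) ^ 4, by positivity, fun X hX a => ?_⟩
  have hX0 : 0 < X := by linarith
  obtain ⟨M, hM, rfl⟩ : ∃ M ≥ 1, M ^ k = X :=
    ⟨X ^ (1 / k), one_le_rpow hX (by positivity), by
      rw [← rpow_mul hX0.le, one_div_mul_cancel hk0.ne', rpow_one]⟩
  have hM0 : 0 < M := by linarith
  have hM2 : (M ^ k) ^ (2 / k) = M ^ 2 := by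
    rw [← rpow_mul hM0.le, mul_div_cancel₀ _ hk0.ne', rpow_two]
  have hM4 : (M ^ k) ^ (4 / k - 1) = M ^ 4 / M ^ k := by
    rw [rpow_sub_one hX0.ne', ← rpow_mul hM0.le, mul_div_cancel₀ _ hk0.ne']
    norm_cast
  have hMθ : M ^ (4 + k * (ε / 2)) = M ^ 4 * (M ^ k) ^ (ε / 2) := by
    rw [rpow_add hM0, rpow_mul hM0.le]
    norm_cast
  calc _ ≤ 8 * (M ^ k / M ^ 2 + 1) *
          ((8 / ε) ^ 4 * (M ^ k) ^ (ε / 2) / M ^ k * (C * M ^ (4 + k * (ε / 2)))) := by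
        refine (integral_norm_Sk_pow_four_le hk0 hδ.le hM a).trans ?_
        gcongr
        · exact integral_nonneg (by positivity) fun y _ => by positivity
        · exact log_pow_four_le hX hε
        · exact hmoment M hM
    _ = 8 * C * (8 / ε) ^ 4 * (M ^ 2 + M ^ 4 / M ^ k) *
          ((M ^ k) ^ (ε / 2) * (M ^ k) ^ (ε / 2)) := by
        rw [hMθ]
        field_simp
    _ = _ := by rw [hM2, hM4, ← rpow_add hX0, add_halves]

end PrimeSum

theorem Sk_fourth_moment_unit (k δ ε : ℝ) (hk : 1 < k) (hδ0 : 0 < δ) (hδ1 : δ < 1) (hε : 0 < ε) :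
    ∃ C > 0, ∀ X ≥ (2 : ℝ), ∀ n : ℕ,
      ∫ α in (n : ℝ)..((n : ℝ) + 1), ‖Sk δ X k α‖ ^ 4
        ≤ C * (X ^ (2 / k) + X ^ (4 / k - 1)) * X ^ ε :=
  let ⟨C, hC, h⟩ := Sk_fourth_moment_unit_general k δ ε hk hδ0 hε
  ⟨C, hC, fun X hX n => h X (one_le_two.trans hX) n⟩
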